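/- arXiv:2007.08079 — 2 statements merged into one kernel-verified Lean document; each statement's English description precedes it below -/
import Mathlib

section
/- Let E₁ and E₂ be ellipsoids in ℝ³ centered at the origin. If Ṽ_{−1}(E₁) = Ṽ_{−1}(E₂), Ṽ₃(E₁) = Ṽ₃(E₂) (i.e., the volumes are equal), and Ṽ₄(E₁) = Ṽ₄(E₂), then E₁ and E₂ are congruent, i.e., the multisets of their semiaxes coincide. (For centered ellipsoids in ℝ³ this triple of dual volumes carries the same information as the triple of intrinsic volumes V₁, V₂, V₃, so this yields the Petrov–Tarasov theorem that ellipsoids in ℝ³ with equal intrinsic volumes V₁, V₂, V₃ are congruent.) -/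
open MeasureTheory Real Set

noncomputable def sphereMeasure (n : ℕ) :
    Measure (Metric.sphere (0 : EuclideanSpace ℝ (Fin n)) 1) :=
  (volume : Measure (EuclideanSpace ℝ (Fin n))).toSphere

noncomputable def radial {n : ℕ} (K : Set (EuclideanSpace ℝ (Fin n)))
    (x : EuclideanSpace ℝ (Fin n)) : ℝ :=
  sSup {t : ℝ | 0 ≤ t ∧ t • x ∈ K}

noncomputable def dualVolume (n : ℕ) (i : ℝ) (K : Set (EuclideanSpace ℝ (Fin n))) : ℝ :=
  (1 / n) * ∫ θ : Metric.sphere (0 : EuclideanSpace ℝ (Fin n)) 1,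
    radial K (θ : EuclideanSpace ℝ (Fin n)) ^ i ∂(sphereMeasure n)

def ellipsoidSet {n : ℕ} (a : Fin n → ℝ) : Set (EuclideanSpace ℝ (Fin n)) :=
  {x | ∑ j, (x j) ^ 2 / (a j) ^ 2 ≤ 1}

/-!
For the ellipsoid with semiaxes `a`, put `p j = (a j)⁻²` and `Q x = ∑ j, p j * x j ^ 2`. On the
sphere `Q = ρ⁻²`, so the `i`-th dual volume is a multiple of `∫ Q ^ (-i / 2)`, and the `n`-th one is
the volume. Since `t + Q` is again such a form, with coefficients `t + p j`, the volume formula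
evaluates `∫ (t + Q) ^ (-n / 2)` as a multiple of `(∏ j, (t + p j)) ^ (-1 / 2)`. Integrated against
`t ^ (n / 2 + s - 1)`, the kernel `(t + Q) ^ (-n / 2)` gives a multiple of `Q ^ s` if
`-n / 2 < s < 0`; so does its difference with `t ^ (-n / 2)` if `0 < s < 1`, and its difference with
`Q ^ (-n / 2)` if `-n / 2 - 1 < s < -n / 2`. Hence, for two ellipsoids of equal volume, each further
pair of equal dual volumes makes one moment of the difference of the two functions
`(∏ j, (t + p j)) ^ (-1 / 2)` vanish.

In dimension three and for equal volumes the two products `∏ j, (t + p j)` differ by `t (α t + β)`,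
so the difference above changes sign at most once on `(0, ∞)`. A combination of two powers of `t`
changes sign at the same point, so two vanishing moments force the products to agree, and the
polynomial `∏ j, (t + p j)` has the roots `-p j`.
-/

section ZeroMoments

/-- The moment of order `r` of `f` over the half-line `(0, ∞)` converges absolutely and vanishes;
Mellin transforms enter the argument only through such relations. -/
def HasZeroMoment (r : ℝ) (f : ℝ → ℝ) : Prop :=
  IntegrableOn (fun t ↦ t ^ r * f t) (Ioi 0) ∧ ∫ t in Ioi (0 : ℝ), t ^ r * f t = 0

variable {f g : ℝ → ℝ} {r s : ℝ}

theorem HasZeroMoment.congr (hf : HasZeroMoment r f) (h : EqOn f g (Ioi 0)) :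
    HasZeroMoment r g := by
  have hmul : EqOn (fun t ↦ t ^ r * f t) (fun t ↦ t ^ r * g t) (Ioi 0) :=
    fun t ht ↦ congrArg (t ^ r * ·) (h ht)
  exact ⟨hf.1.congr_fun hmul measurableSet_Ioi,
    (setIntegral_congr_fun measurableSet_Ioi hmul).symm.trans hf.2⟩

theorem HasZeroMoment.const_mul (hf : HasZeroMoment r f) (c : ℝ) :
    HasZeroMoment r (fun t ↦ c * f t) := by
  simp only [HasZeroMoment, mul_left_comm _ c, integral_const_mul, hf.2, mul_zero, and_true]
  exact hf.1.const_mul c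

theorem HasZeroMoment.neg (hf : HasZeroMoment r f) : HasZeroMoment r (-f) := by
  simpa only [neg_one_mul] using! hf.const_mul (-1)

theorem rpow_sub_rpow_mul_nonneg {t t₀ d y : ℝ} (ht : 0 ≤ t) (ht₀ : 0 ≤ t₀) (hd : 0 < d)
    (h : 0 ≤ (t - t₀) * y) : 0 ≤ (t ^ d - t₀ ^ d) * y := by
  rcases lt_trichotomy t t₀ with hlt | rfl | hlt
  · exact mul_nonneg_of_nonpos_of_nonpos
      (sub_nonpos.2 (rpow_le_rpow ht hlt.le hd.le)) (nonpos_of_mul_nonneg_right h (sub_neg.2 hlt))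
  · simp
  · exact mul_nonneg (sub_nonneg.2 (rpow_le_rpow ht₀ hlt.le hd.le))
      (nonneg_of_mul_nonneg_right h (sub_pos.2 hlt))

-- The combination `t ^ s - t₀ ^ (s - r) * t ^ r` of the two weights changes sign exactly at `t₀`.
theorem eqOn_zero_of_sub_mul_nonneg {t₀ : ℝ} (hrs : r < s) (ht₀ : 0 ≤ t₀)
    (hf : ContinuousOn f (Ioi 0)) (hr : HasZeroMoment r f) (hs : HasZeroMoment s f)
    (hsign : ∀ t > 0, 0 ≤ (t - t₀) * f t) : EqOn f 0 (Ioi 0) := by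
  have hd : 0 < s - r := sub_pos.2 hrs
  set g : ℝ → ℝ := fun t ↦ t ^ s * f t - t₀ ^ (s - r) * (t ^ r * f t) with hg
  have hg_eq : ∀ t > 0, g t = t ^ r * ((t ^ (s - r) - t₀ ^ (s - r)) * f t) := fun t ht ↦ by
    rw [hg, ← sub_add_cancel s r]
    simp only [rpow_add ht, add_sub_cancel_right]
    ring
  have hg_nonneg : ∀ t > 0, 0 ≤ g t := fun t ht ↦ by
    rw [hg_eq t ht]
    exact mul_nonneg (rpow_nonneg ht.le r)
      (rpow_sub_rpow_mul_nonneg ht.le ht₀ hd (hsign t ht))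
  have hg_integral : ∫ t in Ioi (0 : ℝ), g t = 0 := by
    rw [integral_sub hs.1 (hr.1.const_mul _), integral_const_mul, hr.2, hs.2, mul_zero, sub_zero]
  have hg_zero : g =ᵐ[volume.restrict (Ioi 0)] 0 :=
    (setIntegral_eq_zero_iff_of_nonneg_ae (ae_restrict_of_forall_mem measurableSet_Ioi hg_nonneg)
      (hs.1.sub (hr.1.const_mul _))).1 hg_integral
  refine Measure.eqOn_open_of_ae_eq (μ := volume) ?_ isOpen_Ioi hf continuousOn_const
  filter_upwards [hg_zero, ae_restrict_mem measurableSet_Ioi,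
    ae_restrict_of_ae (Measure.ae_ne volume t₀)] with t hgt ht hne
  rw [hg_eq t ht] at hgt
  have hpow : t ^ (s - r) ≠ t₀ ^ (s - r) :=
    fun h ↦ hne ((rpow_left_inj (mem_Ioi.1 ht).le ht₀ hd.ne').1 h)
  simpa [(rpow_pos_of_pos ht r).ne', sub_ne_zero.2 hpow] using hgt

theorem eqOn_zero_of_affine_mul_nonneg {α β : ℝ} (hrs : r < s) (hf : ContinuousOn f (Ioi 0))
    (hr : HasZeroMoment r f) (hs : HasZeroMoment s f) (hne : ¬(α = 0 ∧ β = 0))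
    (hsign : ∀ t > 0, 0 ≤ (α * t + β) * f t) : EqOn f 0 (Ioi 0) := by
  wlog hα : 0 < α ∨ α = 0 ∧ 0 < β generalizing f α β
  · have hneg : EqOn (-f) 0 (Ioi 0) := by
      refine this (α := -α) (β := -β) hf.neg hr.neg hs.neg (by simpa using hne)
        (fun t ht ↦ (hsign t ht).trans_eq (by simp only [Pi.neg_apply]; ring)) ?_
      grind
    exact fun t ht ↦ neg_eq_zero.1 (hneg ht)
  rcases lt_or_ge β 0 with hβ | hβ
  · have hα : 0 < α := by grind
    refine eqOn_zero_of_sub_mul_nonneg (t₀ := -β / α) hrs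
      (div_nonneg (neg_nonneg.2 hβ.le) hα.le) hf hr hs fun t ht ↦ ?_
    refine (mul_nonneg_iff_of_pos_left hα).1 ((hsign t ht).trans_eq ?_)
    field_simp
    ring
  · refine eqOn_zero_of_sub_mul_nonneg (t₀ := 0) hrs le_rfl hf hr hs fun t ht ↦ ?_
    have hpos : 0 < α * t + β := by
      rcases hα with hα | ⟨rfl, hβ⟩ <;> positivity
    simpa using mul_nonneg ht.le ((mul_nonneg_iff_of_pos_left hpos).1 (hsign t ht))

end ZeroMoments

section HomogeneousKernels

/-- A kernel that is positively homogeneous of degree `s - 1` and integrable in its first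
variable, so that integrating out that variable leaves a multiple of the `s`-th power of the
second one. -/
structure IsHomogeneousKernel (s : ℝ) (h : ℝ → ℝ → ℝ) : Prop where
  measurable : Measurable (Function.uncurry h)
  map_mul : ∀ t > 0, ∀ c > 0, h (c * t) c = c ^ (s - 1) * h t 1
  integrableOn_one : IntegrableOn (fun t ↦ h t 1) (Ioi 0)

namespace IsHomogeneousKernel

variable {h : ℝ → ℝ → ℝ} {s c : ℝ}

theorem norm (hh : IsHomogeneousKernel s h) : IsHomogeneousKernel s fun t c ↦ ‖h t c‖ where
  measurable := hh.measurable.norm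
  map_mul t ht c hc := by
    rw [hh.map_mul t ht c hc, norm_mul, norm_of_nonneg (rpow_nonneg hc.le _)]
  integrableOn_one := hh.integrableOn_one.norm

theorem integrableOn (hh : IsHomogeneousKernel s h) (hc : 0 < c) :
    IntegrableOn (fun t ↦ h t c) (Ioi 0) := by
  have hscaled : IntegrableOn (fun t ↦ h (c * t) c) (Ioi 0) :=
    (integrableOn_congr_fun (fun t ht ↦ hh.map_mul t ht c hc) measurableSet_Ioi).2
      (hh.integrableOn_one.const_mul (c ^ (s - 1)))
  simpa only [mul_zero] using (integrableOn_Ioi_comp_mul_left_iff (fun t ↦ h t c) 0 hc).1 hscaled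

theorem integral_eq (hh : IsHomogeneousKernel s h) (hc : 0 < c) :
    ∫ t in Ioi (0 : ℝ), h t c = (∫ t in Ioi (0 : ℝ), h t 1) * c ^ s :=
  calc ∫ t in Ioi (0 : ℝ), h t c
      = c * ∫ t in Ioi (0 : ℝ), h (c * t) c := by
        rw [integral_comp_mul_left_Ioi (fun t ↦ h t c) 0 hc, mul_zero, smul_eq_mul,
          mul_inv_cancel_left₀ hc.ne']
    _ = c * (c ^ (s - 1) * ∫ t in Ioi (0 : ℝ), h t 1) := by
        rw [setIntegral_congr_fun measurableSet_Ioi fun t ht ↦ hh.map_mul t ht c hc,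
          integral_const_mul]
    _ = (∫ t in Ioi (0 : ℝ), h t 1) * c ^ s := by
        rw [rpow_sub_one hc.ne']
        field_simp

variable {X : Type*} [MeasurableSpace X] {μ : Measure X} {f : X → ℝ}

theorem integrable_prod (hh : IsHomogeneousKernel s h) (hf : Measurable f) (hpos : ∀ x, 0 < f x)
    (hint : Integrable (fun x ↦ f x ^ s) μ) :
    Integrable (Function.uncurry fun x t ↦ h t (f x)) (μ.prod (volume.restrict (Ioi 0))) := by
  refine (integrable_prod_iff ?_).2 ⟨.of_forall fun x ↦ hh.integrableOn (hpos x), ?_⟩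
  · exact (hh.measurable.comp
      (measurable_snd.prodMk (hf.comp measurable_fst))).aestronglyMeasurable
  · exact (hint.const_mul (∫ t in Ioi (0 : ℝ), ‖h t 1‖)).congr
      (.of_forall fun x ↦ (hh.norm.integral_eq (hpos x)).symm)

variable [SFinite μ]

theorem integrableOn_integral (hh : IsHomogeneousKernel s h) (hf : Measurable f)
    (hpos : ∀ x, 0 < f x) (hint : Integrable (fun x ↦ f x ^ s) μ) :
    IntegrableOn (fun t ↦ ∫ x, h t (f x) ∂μ) (Ioi 0) :=
  (hh.integrable_prod hf hpos hint).integral_prod_right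

theorem integral_integral (hh : IsHomogeneousKernel s h) (hf : Measurable f)
    (hpos : ∀ x, 0 < f x) (hint : Integrable (fun x ↦ f x ^ s) μ) :
    ∫ t in Ioi (0 : ℝ), ∫ x, h t (f x) ∂μ
      = (∫ t in Ioi (0 : ℝ), h t 1) * ∫ x, f x ^ s ∂μ := by
  rw [← integral_integral_swap (hh.integrable_prod hf hpos hint), ← integral_const_mul]
  exact integral_congr_ae (.of_forall fun x ↦ hh.integral_eq (hpos x))

end IsHomogeneousKernel

theorem one_sub_one_add_rpow_neg_le {κ t : ℝ} (hκ : 0 ≤ κ) (ht : 0 ≤ t) :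
    1 - (1 + t) ^ (-κ) ≤ κ * t := by
  have hlog : log (1 + t) ≤ t := by linarith [log_le_sub_one_of_pos (show 0 < 1 + t by positivity)]
  have hexp := add_one_le_exp (log (1 + t) * -κ)
  rw [rpow_def_of_pos (by positivity)]
  linarith [mul_le_mul_of_nonneg_left hlog hκ]

theorem integrableOn_rpow_mul_one_add_rpow_sub_one {κ w : ℝ} (hκ : 0 ≤ κ)
    (hw : w ∈ Ioo (-2) (-1)) :
    IntegrableOn (fun t : ℝ ↦ t ^ w * ((1 + t) ^ (-κ) - 1)) (Ioi 0) := by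
  have hmeas : Measurable fun t : ℝ ↦ t ^ w * ((1 + t) ^ (-κ) - 1) := by fun_prop
  have hnorm : ∀ t > 0, ‖t ^ w * ((1 + t) ^ (-κ) - 1)‖ = t ^ w * (1 - (1 + t) ^ (-κ)) :=
    fun t ht ↦ by
      rw [norm_mul, norm_sub_rev, norm_of_nonneg (rpow_nonneg ht.le w), norm_of_nonneg
        (sub_nonneg.2 (rpow_le_one_of_one_le_of_nonpos (by linarith) (neg_nonpos.2 hκ)))]
  rw [← Ioc_union_Ioi_eq_Ioi zero_le_one]
  refine IntegrableOn.union ?_ ?_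
  · have hbound : IntegrableOn (fun t : ℝ ↦ κ * t ^ (w + 1)) (Ioc 0 1) :=
      (intervalIntegral.intervalIntegrable_rpow' (by linarith [hw.1])).1.const_mul κ
    refine hbound.mono' hmeas.aestronglyMeasurable
      (ae_restrict_of_forall_mem measurableSet_Ioc fun t ht ↦ ?_)
    rw [hnorm t ht.1, rpow_add_one ht.1.ne', mul_left_comm]
    exact mul_le_mul_of_nonneg_left (one_sub_one_add_rpow_neg_le hκ ht.1.le) (rpow_nonneg ht.1.le w)
  · refine (integrableOn_Ioi_rpow_of_lt hw.2 one_pos).mono' hmeas.aestronglyMeasurable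
      (ae_restrict_of_forall_mem measurableSet_Ioi fun t ht ↦ ?_)
    have ht₀ : (0 : ℝ) < t := one_pos.trans ht
    rw [hnorm t ht₀]
    exact mul_le_of_le_one_right (rpow_nonneg ht₀.le w)
      (sub_le_self 1 (rpow_nonneg (by linarith) _))

theorem isHomogeneousKernel_rpow_sub_left {κ s : ℝ} (hκ : 0 ≤ κ) (hs : s ∈ Ioo 0 1) :
    IsHomogeneousKernel s fun t c ↦ t ^ (κ + s - 1) * ((t + c) ^ (-κ) - t ^ (-κ)) where
  measurable := by
    unfold Function.uncurry
    fun_prop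
  map_mul t ht c hc := by
    rw [← mul_add_one, mul_rpow hc.le ht.le, mul_rpow hc.le ht.le, mul_rpow hc.le (by positivity),
      show s - 1 = κ + s - 1 + -κ by ring, rpow_add hc (κ + s - 1) (-κ)]
    ring_nf
  integrableOn_one := by
    -- The inversion `t ↦ t⁻¹` exchanges the two ends of the half-line.
    refine ((integrableOn_Ioi_comp_rpow_iff _ (neg_ne_zero.2 one_ne_zero)).2
      (integrableOn_rpow_mul_one_add_rpow_sub_one hκ (w := -s - 1)
        ⟨by linarith [hs.2], by linarith [hs.1]⟩)).congr_fun (fun t (ht : 0 < t) ↦ ?_)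
      measurableSet_Ioi
    have hbase : (1 + t⁻¹) ^ (-κ) = (t + 1) ^ (-κ) * t ^ κ := by
      rw [show 1 + t⁻¹ = (t + 1) / t by field_simp, div_rpow (by positivity) ht.le,
        rpow_neg ht.le κ, div_inv_eq_mul]
    have hweight : t ^ (-1 - 1 : ℝ) * (t ^ (-1 : ℝ)) ^ (-s - 1) = t ^ (s - 1) := by
      rw [← rpow_mul ht.le, ← rpow_add ht]
      ring_nf
    have hsplit : t ^ (κ + s - 1) = t ^ κ * t ^ (s - 1) := by
      rw [← rpow_add ht, add_sub_assoc]
    have hinv : t ^ κ * t ^ (-κ) = 1 := by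
      rw [← rpow_add ht, add_neg_cancel, rpow_zero]
    simp only [abs_neg, abs_one, one_mul, smul_eq_mul]
    rw [← mul_assoc, hweight, hsplit, rpow_neg_one, hbase]
    linear_combination t ^ (s - 1) * hinv

theorem isHomogeneousKernel_rpow_add {κ s : ℝ} (hs : s ∈ Ioo (-κ) 0) :
    IsHomogeneousKernel s fun t c ↦ t ^ (κ + s - 1) * (t + c) ^ (-κ) where
  measurable := by
    unfold Function.uncurry
    fun_prop
  map_mul t ht c hc := by
    rw [← mul_add_one, mul_rpow hc.le ht.le, mul_rpow hc.le (by positivity),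
      show s - 1 = κ + s - 1 + -κ by ring, rpow_add hc (κ + s - 1) (-κ)]
    ring
  integrableOn_one := by
    have hκ : -κ ≤ 0 := (hs.1.trans hs.2).le
    have hmeas : Measurable fun t : ℝ ↦ t ^ (κ + s - 1) * (t + 1) ^ (-κ) := by fun_prop
    have hnorm : ∀ t > 0, ‖t ^ (κ + s - 1) * (t + 1) ^ (-κ)‖ = t ^ (κ + s - 1) * (t + 1) ^ (-κ) :=
      fun t ht ↦ norm_of_nonneg (by positivity)
    rw [← Ioc_union_Ioi_eq_Ioi zero_le_one]
    refine IntegrableOn.union ?_ ?_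
    · refine Integrable.mono' (g := fun t ↦ t ^ (κ + s - 1))
        (intervalIntegral.intervalIntegrable_rpow' (by linarith [hs.1])).1
        hmeas.aestronglyMeasurable (ae_restrict_of_forall_mem measurableSet_Ioc fun t ht ↦ ?_)
      rw [hnorm t ht.1]
      exact mul_le_of_le_one_right (rpow_nonneg ht.1.le _)
        (rpow_le_one_of_one_le_of_nonpos (by linarith [ht.1]) hκ)
    · refine (integrableOn_Ioi_rpow_of_lt (a := s - 1) (by linarith [hs.2]) one_pos).mono'
        hmeas.aestronglyMeasurable (ae_restrict_of_forall_mem measurableSet_Ioi fun t ht ↦ ?_)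
      have ht₀ : (0 : ℝ) < t := one_pos.trans ht
      rw [hnorm t ht₀, show s - 1 = κ + s - 1 + -κ by ring, rpow_add ht₀ (κ + s - 1) (-κ)]
      exact mul_le_mul_of_nonneg_left (rpow_le_rpow_of_nonpos ht₀ (by linarith) hκ)
        (rpow_nonneg ht₀.le _)

theorem isHomogeneousKernel_rpow_sub_right {κ s : ℝ} (hκ : 0 ≤ κ) (hs : s ∈ Ioo (-κ - 1) (-κ)) :
    IsHomogeneousKernel s fun t c ↦ t ^ (κ + s - 1) * ((t + c) ^ (-κ) - c ^ (-κ)) where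
  measurable := by
    unfold Function.uncurry
    fun_prop
  map_mul t ht c hc := by
    rw [← mul_add_one, mul_rpow hc.le ht.le, mul_rpow hc.le (by positivity),
      show s - 1 = κ + s - 1 + -κ by ring, rpow_add hc (κ + s - 1) (-κ), one_rpow]
    ring_nf
  integrableOn_one := by
    simpa only [one_rpow, add_comm] using! integrableOn_rpow_mul_one_add_rpow_sub_one hκ
      (w := κ + s - 1) ⟨by linarith [hs.1], by linarith [hs.2]⟩

end HomogeneousKernels

section StieltjesTransform

variable {X : Type*} [MeasurableSpace X] {μ : Measure X} {f g : X → ℝ} {κ r s : ℝ}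

/-- The generalized Stieltjes transform of order `κ` of the push-forward of `μ` under `f`. -/
noncomputable def stieltjes (μ : Measure X) (κ : ℝ) (f : X → ℝ) (t : ℝ) : ℝ :=
  ∫ x, (t + f x) ^ (-κ) ∂μ

variable [IsFiniteMeasure μ]

theorem integrable_add_rpow_neg {t : ℝ} (hκ : 0 ≤ κ) (ht : 0 < t) (hf : Measurable f)
    (hpos : ∀ x, 0 < f x) : Integrable (fun x ↦ (t + f x) ^ (-κ)) μ :=
  .of_bound ((hf.const_add t).pow_const (-κ)).aestronglyMeasurable (t ^ (-κ)) (.of_forall fun x ↦ by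
    have htx : 0 < t + f x := add_pos ht (hpos x)
    rw [norm_of_nonneg (rpow_nonneg htx.le _)]
    exact rpow_le_rpow_of_nonpos ht (by linarith [hpos x]) (neg_nonpos.2 hκ))

theorem hasZeroMoment_stieltjes_sub {b : ℝ → ℝ → ℝ}
    (hh : IsHomogeneousKernel s fun t c ↦ t ^ r * ((t + c) ^ (-κ) - b t c)) (hκ : 0 ≤ κ)
    (hf : Measurable f) (hfpos : ∀ x, 0 < f x) (hg : Measurable g) (hgpos : ∀ x, 0 < g x)
    (hfs : Integrable (fun x ↦ f x ^ s) μ) (hgs : Integrable (fun x ↦ g x ^ s) μ)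
    (hs : ∫ x, f x ^ s ∂μ = ∫ x, g x ^ s ∂μ)
    (hfb : ∀ t > 0, Integrable (fun x ↦ b t (f x)) μ)
    (hgb : ∀ t > 0, Integrable (fun x ↦ b t (g x)) μ)
    (hb : ∀ t > 0, ∫ x, b t (f x) ∂μ = ∫ x, b t (g x) ∂μ) :
    HasZeroMoment r (stieltjes μ κ f - stieltjes μ κ g) := by
  have hkernel : EqOn (fun t ↦ (∫ x, t ^ r * ((t + f x) ^ (-κ) - b t (f x)) ∂μ)
        - ∫ x, t ^ r * ((t + g x) ^ (-κ) - b t (g x)) ∂μ)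
      (fun t ↦ t ^ r * (stieltjes μ κ f - stieltjes μ κ g) t) (Ioi 0) := fun t ht ↦ by
    simp only [integral_const_mul]
    rw [integral_sub (integrable_add_rpow_neg hκ ht hf hfpos) (hfb t ht),
      integral_sub (integrable_add_rpow_neg hκ ht hg hgpos) (hgb t ht), hb t ht]
    simp only [Pi.sub_apply, stieltjes]
    ring
  have hfint := hh.integrableOn_integral hf hfpos hfs
  have hgint := hh.integrableOn_integral hg hgpos hgs
  refine ⟨(hfint.sub hgint).congr_fun hkernel measurableSet_Ioi, ?_⟩
  rw [← setIntegral_congr_fun measurableSet_Ioi hkernel, integral_sub hfint hgint,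
    hh.integral_integral hf hfpos hfs, hh.integral_integral hg hgpos hgs, hs, sub_self]

theorem hasZeroMoment_stieltjes_sub_of_mem_Ioo_zero_one (hκ : 0 ≤ κ) (hs : s ∈ Ioo 0 1)
    (hf : Measurable f) (hfpos : ∀ x, 0 < f x) (hg : Measurable g) (hgpos : ∀ x, 0 < g x)
    (hfs : Integrable (fun x ↦ f x ^ s) μ) (hgs : Integrable (fun x ↦ g x ^ s) μ)
    (heq : ∫ x, f x ^ s ∂μ = ∫ x, g x ^ s ∂μ) :
    HasZeroMoment (κ + s - 1) (stieltjes μ κ f - stieltjes μ κ g) :=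
  hasZeroMoment_stieltjes_sub (isHomogeneousKernel_rpow_sub_left hκ hs) hκ hf hfpos hg hgpos
    hfs hgs heq (fun _ _ ↦ integrable_const _) (fun _ _ ↦ integrable_const _) fun _ _ ↦ rfl

theorem hasZeroMoment_stieltjes_sub_of_mem_Ioo_neg_zero (hs : s ∈ Ioo (-κ) 0)
    (hf : Measurable f) (hfpos : ∀ x, 0 < f x) (hg : Measurable g) (hgpos : ∀ x, 0 < g x)
    (hfs : Integrable (fun x ↦ f x ^ s) μ) (hgs : Integrable (fun x ↦ g x ^ s) μ)
    (heq : ∫ x, f x ^ s ∂μ = ∫ x, g x ^ s ∂μ) :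
    HasZeroMoment (κ + s - 1) (stieltjes μ κ f - stieltjes μ κ g) :=
  hasZeroMoment_stieltjes_sub (b := fun _ _ ↦ 0)
    (by simpa only [sub_zero] using isHomogeneousKernel_rpow_add hs) (by linarith [hs.1, hs.2])
    hf hfpos hg hgpos hfs hgs heq (fun _ _ ↦ integrable_zero _ _ _)
    (fun _ _ ↦ integrable_zero _ _ _) fun _ _ ↦ rfl

theorem hasZeroMoment_stieltjes_sub_of_mem_Ioo_neg_sub_one (hκ : 0 ≤ κ) (hs : s ∈ Ioo (-κ - 1) (-κ))
    (hf : Measurable f) (hfpos : ∀ x, 0 < f x) (hg : Measurable g) (hgpos : ∀ x, 0 < g x)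
    (hfs : Integrable (fun x ↦ f x ^ s) μ) (hgs : Integrable (fun x ↦ g x ^ s) μ)
    (heq : ∫ x, f x ^ s ∂μ = ∫ x, g x ^ s ∂μ)
    (hfκ : Integrable (fun x ↦ f x ^ (-κ)) μ) (hgκ : Integrable (fun x ↦ g x ^ (-κ)) μ)
    (hκeq : ∫ x, f x ^ (-κ) ∂μ = ∫ x, g x ^ (-κ) ∂μ) :
    HasZeroMoment (κ + s - 1) (stieltjes μ κ f - stieltjes μ κ g) :=
  hasZeroMoment_stieltjes_sub (isHomogeneousKernel_rpow_sub_right hκ hs) hκ hf hfpos hg hgpos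
    hfs hgs heq (fun _ _ ↦ hfκ) (fun _ _ ↦ hgκ) fun _ _ ↦ hκeq

end StieltjesTransform

section Permutations

theorem exists_perm_eq_comp_of_map_eq {ι α : Type*} [Fintype ι] {p q : ι → α}
    (h : Finset.univ.val.map p = Finset.univ.val.map q) :
    ∃ σ : Equiv.Perm ι, ∀ j, q j = p (σ j) := by
  classical
  have hcard (c : α) : Fintype.card {j // q j = c} = Fintype.card {j // p j = c} := by
    have hcount := congrArg (Multiset.count c) h
    rw [Multiset.count_map, Multiset.count_map] at hcount
    simp only [eq_comm (a := c)] at hcount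
    simpa only [Fintype.card_subtype] using! hcount.symm
  let e (c : α) : {j // q j = c} ≃ {j // p j = c} := Fintype.equivOfCardEq (hcard c)
  exact ⟨Equiv.ofFiberEquiv e, fun j ↦ (Equiv.ofFiberEquiv_map e j).symm⟩

theorem exists_perm_eq_comp_of_prod_add_eq {ι R : Type*} [Fintype ι] [CommRing R] [IsDomain R]
    {p q : ι → R} {s : Set R} (hs : s.Infinite)
    (h : ∀ t ∈ s, ∏ j, (t + p j) = ∏ j, (t + q j)) :
    ∃ σ : Equiv.Perm ι, ∀ j, q j = p (σ j) := by
  have hpoly : ∏ j, (Polynomial.X - Polynomial.C (-p j))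
      = ∏ j, (Polynomial.X - Polynomial.C (-q j)) :=
    Polynomial.eq_of_infinite_eval_eq _ _ (hs.mono fun t ht ↦ by
      simpa [Polynomial.eval_prod] using h t ht)
  have hroots (r : ι → R) : (∏ j, (Polynomial.X - Polynomial.C (-r j))).roots
      = Finset.univ.val.map fun j ↦ -r j := by
    rw [← Polynomial.roots_multiset_prod_X_sub_C (Finset.univ.val.map _), Multiset.map_map]
    rfl
  obtain ⟨σ, hσ⟩ := exists_perm_eq_comp_of_map_eq
    ((hroots p).symm.trans ((congrArg Polynomial.roots hpoly).trans (hroots q)))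
  exact ⟨σ, fun j ↦ neg_inj.1 (hσ j)⟩

end Permutations

section PolarCoordinates

variable {E : Type*} [NormedAddCommGroup E] [NormedSpace ℝ E] [MeasurableSpace E] [BorelSpace E]
  {μ : Measure E}

open scoped Pointwise in
theorem measurePreserving_toSphere {T : E ≃ₗᵢ[ℝ] E} (hT : MeasurePreserving T μ μ) :
    MeasurePreserving (T.toHomeomorph.subtype (p := (· ∈ Metric.sphere 0 1))
      (q := (· ∈ Metric.sphere 0 1)) fun x ↦ by simp) μ.toSphere μ.toSphere := by
  refine ⟨(Homeomorph.measurableEmbedding _).measurable, Measure.ext fun s hs ↦ ?_⟩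
  set S := T.toHomeomorph.subtype (p := (· ∈ Metric.sphere 0 1)) (q := (· ∈ Metric.sphere 0 1))
    (fun x ↦ by simp) with hS
  have hsector : Ioo (0 : ℝ) 1 • ((↑) '' (S ⁻¹' s)) = T ⁻¹' (Ioo (0 : ℝ) 1 • ((↑) '' s)) := by
    have hcoe : ((↑) '' s : Set E) = T '' ((↑) '' (S ⁻¹' s)) := by
      rw [image_image, ← image_preimage_eq s S.surjective, image_image]
      simp [hS]
    have hsmul (B : Set E) : Ioo (0 : ℝ) 1 • (T '' B) = T '' (Ioo (0 : ℝ) 1 • B) :=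
      (image_image2_distrib_right fun r x ↦ map_smul T r x).symm
    rw [hcoe, hsmul, preimage_image_eq _ T.injective]
  rw [Measure.map_apply S.measurable hs, Measure.toSphere_apply' _ (S.measurable hs),
    Measure.toSphere_apply' _ hs, hsector,
    hT.measure_preimage_emb T.toHomeomorph.measurableEmbedding]

theorem measure_eq_lintegral_toSphere [FiniteDimensional ℝ E] [Nontrivial E] [μ.IsAddHaarMeasure]
    {K : Set E} (hK : MeasurableSet K) :
    μ K = ∫⁻ θ : Metric.sphere (0 : E) 1,
      Measure.volumeIoiPow (Module.finrank ℝ E - 1) {r | (r : ℝ) • (θ : E) ∈ K} ∂μ.toSphere := by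
  set A : Set (Metric.sphere (0 : E) 1 × Ioi (0 : ℝ)) := {z | (z.2 : ℝ) • (z.1 : E) ∈ K} with hA
  have hmeas : MeasurableSet A := hK.preimage (by fun_prop)
  have hpre : homeomorphUnitSphereProd E ⁻¹' A = (↑) ⁻¹' K := by
    ext x
    have hx : ‖(x : E)‖ ≠ 0 := norm_ne_zero_iff.2 x.2
    simp [hA, smul_smul, hx]
  calc μ K = μ (K \ {0}) := (measure_sdiff_null (measure_singleton 0)).symm
    _ = μ.toSphere.prod (Measure.volumeIoiPow (Module.finrank ℝ E - 1)) A := by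
        rw [← μ.measurePreserving_homeomorphUnitSphereProd.measure_preimage
            hmeas.nullMeasurableSet, hpre, comap_subtype_coe_apply
            (measurableSet_singleton _).compl, Subtype.image_preimage_coe, inter_comm,
          Set.sdiff_eq]
    _ = _ := Measure.prod_apply hmeas

theorem volumeIoiPow_apply_of_subset (m : ℕ) {s : Set (Ioi (0 : ℝ))} {ρ : ℝ} (hρ : 0 ≤ ρ)
    (hs : MeasurableSet s) (hlow : Ioo 0 ρ ⊆ (↑) '' s) (hup : (↑) '' s ⊆ Ioc 0 ρ) :
    Measure.volumeIoiPow m s = ENNReal.ofReal (ρ ^ (m + 1) / (m + 1)) := by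
  have hae : ((↑) '' s : Set ℝ) =ᵐ[volume] Ioc 0 ρ :=
    hup.eventuallyLE.antisymm (Ioo_ae_eq_Ioc.symm.le.trans hlow.eventuallyLE)
  rw [Measure.volumeIoiPow, withDensity_apply _ hs,
    setLIntegral_subtype measurableSet_Ioi _ fun a : ℝ ↦ .ofReal (a ^ m),
    Measure.restrict_congr_set hae,
    ← ofReal_integral_eq_lintegral_ofReal (intervalIntegral.intervalIntegrable_pow _).1,
    ← intervalIntegral.integral_of_le hρ]
  · simp
  · filter_upwards [ae_restrict_mem measurableSet_Ioc] with y hy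
    exact pow_nonneg hy.1.le _

end PolarCoordinates

section EuclideanSpheres

local notation "𝔼" n:max => EuclideanSpace ℝ (Fin n)
local notation "𝕊" n:max => Metric.sphere (0 : EuclideanSpace ℝ (Fin n)) 1

section DualVolumes

variable {n : ℕ}

variable {K : Set (𝔼 n)} {x : 𝔼 n} {t : ℝ}

theorem radial_nonneg (K : Set (𝔼 n)) (x : 𝔼 n) : 0 ≤ radial K x :=
  Real.sSup_nonneg fun _ ht ↦ ht.1

theorem le_radial (hK : Bornology.IsBounded K) (hx : x ≠ 0) (ht : 0 ≤ t) (htx : t • x ∈ K) :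
    t ≤ radial K x := by
  obtain ⟨R, hR⟩ := hK.exists_norm_le
  refine le_csSup ⟨R / ‖x‖, fun u hu ↦ ?_⟩ ⟨ht, htx⟩
  rw [le_div_iff₀ (norm_pos_iff.2 hx), ← abs_of_nonneg hu.1, ← norm_eq_abs, ← norm_smul]
  exact hR _ hu.2

theorem smul_mem_of_lt_radial (hK : StarConvex ℝ 0 K) (ht : 0 ≤ t) (htx : t < radial K x) :
    t • x ∈ K := by
  have hne : {u : ℝ | 0 ≤ u ∧ u • x ∈ K}.Nonempty := by
    by_contra! hempty
    rw [radial, hempty, Real.sSup_empty] at htx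
    exact htx.not_ge ht
  obtain ⟨u, ⟨-, hux⟩, htu⟩ := exists_lt_of_lt_csSup hne htx
  have hu : 0 < u := ht.trans_lt htu
  simpa [smul_smul, hu.ne'] using
    hK.smul_mem hux (div_nonneg ht hu.le) ((div_le_one hu).2 htu.le)

theorem radial_image (T : 𝔼 n ≃ₗᵢ[ℝ] 𝔼 n) (K : Set (𝔼 n)) (x : 𝔼 n) :
    radial (T '' K) x = radial K (T.symm x) := by
  simp only [radial, ← map_smul, T.image_eq_preimage_symm, mem_preimage]

theorem dualVolume_image (T : 𝔼 n ≃ₗᵢ[ℝ] 𝔼 n) (i : ℝ) (K : Set (𝔼 n)) :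
    dualVolume n i (T '' K) = dualVolume n i K := by
  simp only [dualVolume, radial_image]
  congr 1
  exact (measurePreserving_toSphere T.symm.measurePreserving).integral_comp
    (Homeomorph.measurableEmbedding _) fun θ ↦ radial K θ ^ i

theorem volumeIoiPow_setOf_smul_mem (hn : n ≠ 0) (hmeas : MeasurableSet K)
    (hbdd : Bornology.IsBounded K) (hstar : StarConvex ℝ 0 K) (hx : x ≠ 0) :
    Measure.volumeIoiPow (n - 1) {r | (r : ℝ) • x ∈ K}
      = ENNReal.ofReal (1 / n * radial K x ^ (n : ℝ)) := by
  have hcast : ((n - 1 : ℕ) : ℝ) + 1 = n := by exact_mod_cast Nat.sub_add_cancel (by lia)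
  have hslice : MeasurableSet {r : Ioi (0 : ℝ) | (r : ℝ) • x ∈ K} := hmeas.preimage (by fun_prop)
  rw [volumeIoiPow_apply_of_subset (n - 1) (radial_nonneg K x) hslice, hcast,
    Nat.sub_add_cancel (by lia), rpow_natCast, one_div_mul_eq_div]
  · exact fun r hr ↦ ⟨⟨r, hr.1⟩, smul_mem_of_lt_radial hstar hr.1.le hr.2, rfl⟩
  · rintro _ ⟨r, hr, rfl⟩
    exact ⟨r.2, le_radial hbdd hx (mem_Ioi.1 r.2).le hr⟩

theorem dualVolume_natCast (hn : n ≠ 0) (hmeas : MeasurableSet K) (hbdd : Bornology.IsBounded K)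
    (hstar : StarConvex ℝ 0 K) : dualVolume n n K = volume.real K := by
  have : NeZero n := ⟨hn⟩
  have hslice (θ : 𝕊 n) : Measure.volumeIoiPow (n - 1) {r | (r : ℝ) • (θ : 𝔼 n) ∈ K}
      = ENNReal.ofReal (1 / n * radial K θ ^ (n : ℝ)) :=
    volumeIoiPow_setOf_smul_mem hn hmeas hbdd hstar (ne_zero_of_mem_unit_sphere θ)
  have hnonneg (θ : 𝕊 n) : 0 ≤ 1 / n * radial K θ ^ (n : ℝ) :=
    mul_nonneg (by positivity) (rpow_nonneg (radial_nonneg K θ) _)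
  have hslice_meas : Measurable fun θ : 𝕊 n ↦ ENNReal.ofReal (1 / n * radial K θ ^ (n : ℝ)) := by
    simp only [← hslice]
    have hpreimage : MeasurableSet {z : 𝕊 n × Ioi (0 : ℝ) | (z.2 : ℝ) • (z.1 : 𝔼 n) ∈ K} :=
      hmeas.preimage (by fun_prop)
    exact measurable_measure_prodMk_left hpreimage
  rw [measureReal_def, measure_eq_lintegral_toSphere hmeas, finrank_euclideanSpace_fin,
    lintegral_congr hslice, dualVolume, ← integral_const_mul, sphereMeasure,
    ← integral_toReal hslice_meas.aemeasurable (.of_forall fun _ ↦ ENNReal.ofReal_lt_top)]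
  simp only [ENNReal.toReal_ofReal (hnonneg _)]

end DualVolumes

section Ellipsoids

variable {n : ℕ} {p : Fin n → ℝ} {x : 𝔼 n} {t : ℝ}

/-- The diagonal quadratic form with coefficients `p`. For `p j = (a j)⁻²` its value at a unit
vector `θ` is `ρ(θ)⁻²`, where `ρ` is the radial function of the ellipsoid with semiaxes `a`. -/
def diagForm (p : Fin n → ℝ) (x : 𝔼 n) : ℝ :=
  ∑ j, p j * x j ^ 2

theorem continuous_diagForm (p : Fin n → ℝ) : Continuous (diagForm p) := by
  unfold diagForm
  fun_prop

theorem diagForm_smul (p : Fin n → ℝ) (t : ℝ) (x : 𝔼 n) :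
    diagForm p (t • x) = t ^ 2 * diagForm p x := by
  simp only [diagForm, PiLp.smul_apply, smul_eq_mul, mul_pow, Finset.mul_sum, mul_left_comm]

theorem diagForm_const_add (p : Fin n → ℝ) (t : ℝ) (x : 𝔼 n) :
    diagForm (fun j ↦ t + p j) x = t * ‖x‖ ^ 2 + diagForm p x := by
  simp only [diagForm, add_mul, Finset.sum_add_distrib, EuclideanSpace.real_norm_sq_eq,
    Finset.mul_sum]

theorem diagForm_pos (hp : ∀ j, 0 < p j) (hx : x ≠ 0) : 0 < diagForm p x := by
  obtain ⟨j, hj⟩ : ∃ j, x j ≠ 0 := by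
    by_contra! h
    exact hx (PiLp.ext h)
  exact Finset.sum_pos' (fun i _ ↦ mul_nonneg (hp i).le (sq_nonneg _))
    ⟨j, Finset.mem_univ j, mul_pos (hp j) (by positivity)⟩

/-- The positive square root of the diagonal operator with entries `p`; it turns `diagForm p`
into the squared norm. -/
noncomputable def sqrtDiagonal (p : Fin n → ℝ) : 𝔼 n →ₗ[ℝ] 𝔼 n :=
  Matrix.toLpLin 2 2 (Matrix.diagonal fun j ↦ √(p j))

theorem norm_sqrtDiagonal_sq (hp : ∀ j, 0 ≤ p j) (x : 𝔼 n) :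
    ‖sqrtDiagonal p x‖ ^ 2 = diagForm p x := by
  simp [sqrtDiagonal, EuclideanSpace.real_norm_sq_eq, Matrix.mulVec_diagonal, mul_pow, diagForm,
    sq_sqrt, hp]

theorem preimage_sqrtDiagonal_closedBall (hp : ∀ j, 0 ≤ p j) :
    sqrtDiagonal p ⁻¹' Metric.closedBall 0 1 = {x | diagForm p x ≤ 1} := by
  ext x
  simp [← norm_sqrtDiagonal_sq hp]

theorem det_sqrtDiagonal (hp : ∀ j, 0 ≤ p j) : (sqrtDiagonal p).det = √(∏ j, p j) := by
  rw [sqrtDiagonal, LinearMap.det_toLpLin, Matrix.det_diagonal, sqrt_prod _ fun j _ ↦ hp j]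

theorem det_sqrtDiagonal_ne_zero (hp : ∀ j, 0 < p j) : (sqrtDiagonal p).det ≠ 0 := by
  rw [det_sqrtDiagonal fun j ↦ (hp j).le]
  exact (sqrt_pos.2 (Finset.prod_pos fun j _ ↦ hp j)).ne'

theorem isBounded_setOf_diagForm_le_one (hp : ∀ j, 0 < p j) :
    Bornology.IsBounded {x | diagForm p x ≤ 1} := by
  have hker : (sqrtDiagonal p).ker = ⊥ :=
    not_not.1 (mt LinearMap.det_eq_zero_iff_ker_ne_bot.2 (det_sqrtDiagonal_ne_zero hp))
  obtain ⟨C, -, hC⟩ := LinearMap.exists_antilipschitzWith (sqrtDiagonal p) hker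
  rw [← preimage_sqrtDiagonal_closedBall fun j ↦ (hp j).le]
  exact hC.isBounded_preimage Metric.isBounded_closedBall

theorem starConvex_setOf_diagForm_le_one (hp : ∀ j, 0 ≤ p j) :
    StarConvex ℝ 0 {x | diagForm p x ≤ 1} := by
  rw [← preimage_sqrtDiagonal_closedBall hp]
  refine StarConvex.linear_preimage _ ?_
  rw [map_zero]
  exact (convex_closedBall 0 1).starConvex (by simp)

theorem volume_setOf_diagForm_le_one (hp : ∀ j, 0 < p j) :
    volume.real {x | diagForm p x ≤ 1}
      = volume.real (Metric.closedBall (0 : 𝔼 n) 1)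
        * (∏ j, p j) ^ (-1 / 2 : ℝ) := by
  have hprod : 0 < ∏ j, p j := Finset.prod_pos fun j _ ↦ hp j
  rw [← preimage_sqrtDiagonal_closedBall fun j ↦ (hp j).le, measureReal_def,
    Measure.addHaar_preimage_linearMap _ (det_sqrtDiagonal_ne_zero hp),
    det_sqrtDiagonal fun j ↦ (hp j).le, ENNReal.toReal_mul, ENNReal.toReal_ofReal (abs_nonneg _),
    abs_of_nonneg (by positivity), neg_div, rpow_neg hprod.le, sqrt_eq_rpow, mul_comm,
    measureReal_def]

theorem radial_setOf_diagForm_le_one (hx : 0 < diagForm p x) :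
    radial {y | diagForm p y ≤ 1} x = diagForm p x ^ (-1 / 2 : ℝ) := by
  have hset : {t : ℝ | 0 ≤ t ∧ t • x ∈ {y | diagForm p y ≤ 1}}
      = Icc 0 (diagForm p x ^ (-1 / 2 : ℝ)) := by
    ext t
    simp only [mem_ofPred_eq, mem_Icc, diagForm_smul]
    refine and_congr_right fun ht ↦ ?_
    rw [neg_div, rpow_neg hx.le, ← sqrt_eq_rpow, ← one_div, le_div_iff₀ (sqrt_pos.2 hx),
      ← sq_le_one_iff₀ (a := t * √(diagForm p x)) (by positivity), mul_pow, sq_sqrt hx.le]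
  rw [radial, hset, csSup_Icc (by positivity)]

theorem dualVolume_setOf_diagForm_le_one (hp : ∀ j, 0 < p j) (i : ℝ) :
    dualVolume n i {x | diagForm p x ≤ 1}
      = (1 / n) * ∫ θ : 𝕊 n, diagForm p θ ^ (-i / 2) ∂sphereMeasure n := by
  have hradial (θ : 𝕊 n) :
      radial {x | diagForm p x ≤ 1} θ ^ i = diagForm p θ ^ (-i / 2) := by
    have hpos := diagForm_pos hp (ne_zero_of_mem_unit_sphere θ)
    rw [radial_setOf_diagForm_le_one hpos, ← rpow_mul hpos.le]
    ring_nf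
  simp only [dualVolume, hradial]

theorem integral_diagForm_rpow_neg (hn : n ≠ 0) (hp : ∀ j, 0 < p j) :
    ∫ θ : 𝕊 n, diagForm p θ ^ (-(n / 2) : ℝ) ∂sphereMeasure n
      = n * volume.real (Metric.closedBall (0 : 𝔼 n) 1)
        * (∏ j, p j) ^ (-1 / 2 : ℝ) := by
  have hmeas : MeasurableSet {x | diagForm p x ≤ 1} :=
    measurableSet_le (continuous_diagForm p).measurable measurable_const
  have hdual := dualVolume_natCast hn hmeas (isBounded_setOf_diagForm_le_one hp)
    (starConvex_setOf_diagForm_le_one fun j ↦ (hp j).le)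
  rw [dualVolume_setOf_diagForm_le_one hp, volume_setOf_diagForm_le_one hp, one_div_mul_eq_div,
    div_eq_iff (Nat.cast_ne_zero.2 hn), neg_div] at hdual
  rw [hdual]
  ring

theorem stieltjes_diagForm (hn : n ≠ 0) (hp : ∀ j, 0 ≤ p j) (ht : 0 < t) :
    stieltjes (sphereMeasure n) (n / 2) (fun θ ↦ diagForm p θ) t
      = n * volume.real (Metric.closedBall (0 : 𝔼 n) 1)
        * (∏ j, (t + p j)) ^ (-1 / 2 : ℝ) := by
  rw [← integral_diagForm_rpow_neg hn fun j ↦ add_pos_of_pos_of_nonneg ht (hp j)]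
  simp only [stieltjes, diagForm_const_add, norm_eq_of_mem_sphere, one_pow, mul_one]

theorem ellipsoidSet_eq_setOf_diagForm_le_one (a : Fin n → ℝ) :
    ellipsoidSet a = {x | diagForm (fun j ↦ (a j ^ 2)⁻¹) x ≤ 1} := by
  simp only [ellipsoidSet, diagForm, div_eq_inv_mul]

theorem image_ellipsoidSet_piLpCongrLeft (a : Fin n → ℝ) (σ : Equiv.Perm (Fin n)) :
    LinearIsometryEquiv.piLpCongrLeft 2 ℝ ℝ σ '' ellipsoidSet (a ∘ σ) = ellipsoidSet a := by
  ext x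
  simp only [LinearIsometryEquiv.image_eq_preimage_symm, ellipsoidSet, mem_preimage,
    mem_ofPred_eq, LinearIsometryEquiv.piLpCongrLeft_symm, LinearIsometryEquiv.piLpCongrLeft_apply,
    Equiv.piCongrLeft'_apply, Equiv.symm_symm, Function.comp_apply]
  rw [Equiv.sum_comp σ fun j ↦ x j ^ 2 / a j ^ 2]

end Ellipsoids

section MomentsOfEllipsoids

variable {n : ℕ} {p q : Fin n → ℝ}

instance isFiniteMeasure_sphereMeasure (n : ℕ) : IsFiniteMeasure (sphereMeasure n) :=
  inferInstanceAs (IsFiniteMeasure (volume : Measure (𝔼 n)).toSphere)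

theorem integrable_diagForm_rpow (hp : ∀ j, 0 < p j) (s : ℝ) :
    Integrable (fun θ : 𝕊 n ↦ diagForm p θ ^ s) (sphereMeasure n) :=
  (((continuous_diagForm p).comp continuous_subtype_val).rpow_const fun θ ↦
    .inl (diagForm_pos hp (ne_zero_of_mem_unit_sphere θ)).ne').integrable_of_hasCompactSupport
      (.of_compactSpace _)

theorem integral_diagForm_rpow_eq_of_dualVolume_eq {i : ℝ} (hn : n ≠ 0) (hp : ∀ j, 0 < p j)
    (hq : ∀ j, 0 < q j)
    (h : dualVolume n i {x | diagForm p x ≤ 1} = dualVolume n i {x | diagForm q x ≤ 1}) :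
    ∫ θ : 𝕊 n, diagForm p θ ^ (-i / 2) ∂sphereMeasure n
      = ∫ θ : 𝕊 n, diagForm q θ ^ (-i / 2) ∂sphereMeasure n := by
  rw [dualVolume_setOf_diagForm_le_one hp, dualVolume_setOf_diagForm_le_one hq] at h
  exact mul_left_cancel₀ (by positivity) h

theorem closedBall_one_volume_real_pos (n : ℕ) :
    0 < volume.real (Metric.closedBall (0 : 𝔼 n) 1) :=
  ENNReal.toReal_pos (Metric.measure_closedBall_pos volume 0 one_pos).ne'
    measure_closedBall_lt_top.ne

theorem prod_eq_of_dualVolume_eq (hn : n ≠ 0) (hp : ∀ j, 0 < p j) (hq : ∀ j, 0 < q j)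
    (h : dualVolume n n {x | diagForm p x ≤ 1} = dualVolume n n {x | diagForm q x ≤ 1}) :
    ∏ j, p j = ∏ j, q j := by
  have hint := integral_diagForm_rpow_eq_of_dualVolume_eq hn hp hq h
  rw [neg_div, integral_diagForm_rpow_neg hn hp, integral_diagForm_rpow_neg hn hq] at hint
  exact (rpow_left_inj (Finset.prod_nonneg fun j _ ↦ (hp j).le)
    (Finset.prod_nonneg fun j _ ↦ (hq j).le) (by norm_num)).1
    (mul_left_cancel₀ (mul_pos (by positivity) (closedBall_one_volume_real_pos n)).ne' hint)

theorem hasZeroMoment_stieltjes_diagForm_sub {i : ℝ} (hn : n ≠ 0) (hp : ∀ j, 0 < p j)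
    (hq : ∀ j, 0 < q j)
    (hvol : dualVolume n n {x | diagForm p x ≤ 1} = dualVolume n n {x | diagForm q x ≤ 1})
    (hi : i ∈ Ioo (-2) (n + 2 : ℝ)) (hi₀ : i ≠ 0) (hin : i ≠ n)
    (h : dualVolume n i {x | diagForm p x ≤ 1} = dualVolume n i {x | diagForm q x ≤ 1}) :
    HasZeroMoment (n / 2 + -i / 2 - 1) (stieltjes (sphereMeasure n) (n / 2) (diagForm p ·)
      - stieltjes (sphereMeasure n) (n / 2) (diagForm q ·)) := by
  obtain ⟨hlow, hup⟩ := hi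
  have hmeas (p : Fin n → ℝ) : Measurable fun θ : 𝕊 n ↦ diagForm p θ :=
    ((continuous_diagForm p).comp continuous_subtype_val).measurable
  have hform_pos {p : Fin n → ℝ} (hp : ∀ j, 0 < p j) (θ : 𝕊 n) : 0 < diagForm p θ :=
    diagForm_pos hp (ne_zero_of_mem_unit_sphere θ)
  have hn_half : (0 : ℝ) ≤ n / 2 := by positivity
  have hint := integral_diagForm_rpow_eq_of_dualVolume_eq hn hp hq h
  have hpi := integrable_diagForm_rpow hp (-i / 2)
  have hqi := integrable_diagForm_rpow hq (-i / 2)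
  rcases hi₀.lt_or_gt with hneg | hpos
  · exact hasZeroMoment_stieltjes_sub_of_mem_Ioo_zero_one hn_half
      ⟨by linarith, by linarith⟩ (hmeas p) (hform_pos hp) (hmeas q) (hform_pos hq) hpi hqi hint
  rcases hin.lt_or_gt with hlt | hgt
  · exact hasZeroMoment_stieltjes_sub_of_mem_Ioo_neg_zero
      ⟨by linarith, by linarith⟩ (hmeas p) (hform_pos hp) (hmeas q) (hform_pos hq) hpi hqi hint
  · have hvol_int := integral_diagForm_rpow_eq_of_dualVolume_eq hn hp hq hvol
    rw [neg_div] at hvol_int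
    exact hasZeroMoment_stieltjes_sub_of_mem_Ioo_neg_sub_one hn_half
      ⟨by linarith, by linarith⟩ (hmeas p) (hform_pos hp) (hmeas q) (hform_pos hq) hpi hqi hint
      (integrable_diagForm_rpow hp _) (integrable_diagForm_rpow hq _) hvol_int

theorem hasZeroMoment_prod_add_rpow_sub {i : ℝ} (hn : n ≠ 0) (hp : ∀ j, 0 < p j)
    (hq : ∀ j, 0 < q j)
    (hvol : dualVolume n n {x | diagForm p x ≤ 1} = dualVolume n n {x | diagForm q x ≤ 1})
    (hi : i ∈ Ioo (-2) (n + 2 : ℝ)) (hi₀ : i ≠ 0) (hin : i ≠ n)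
    (h : dualVolume n i {x | diagForm p x ≤ 1} = dualVolume n i {x | diagForm q x ≤ 1}) :
    HasZeroMoment ((n - i) / 2 - 1)
      fun t ↦ (∏ j, (t + p j)) ^ (-1 / 2 : ℝ) - (∏ j, (t + q j)) ^ (-1 / 2 : ℝ) := by
  rw [show (n - i) / 2 - 1 = n / 2 + -i / 2 - 1 by ring]
  set C := n * volume.real (Metric.closedBall (0 : 𝔼 n) 1) with hC
  have hC_ne : C ≠ 0 := (mul_pos (by positivity) (closedBall_one_volume_real_pos n)).ne'
  refine ((hasZeroMoment_stieltjes_diagForm_sub hn hp hq hvol hi hi₀ hin h).const_mul C⁻¹).congr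
    fun t ht ↦ ?_
  beta_reduce
  rw [Pi.sub_apply, stieltjes_diagForm hn (fun j ↦ (hp j).le) ht,
    stieltjes_diagForm hn (fun j ↦ (hq j).le) ht, ← hC]
  field_simp

end MomentsOfEllipsoids

end EuclideanSpheres

section DimensionThree

theorem prod_add_sub_prod_add_of_prod_eq {R : Type*} [CommRing R] {p q : Fin 3 → R}
    (h : ∏ j, p j = ∏ j, q j) (t : R) :
    ∏ j, (t + q j) - ∏ j, (t + p j)
      = t * ((∑ j, q j - ∑ j, p j) * t
        + (q 0 * q 1 + q 0 * q 2 + q 1 * q 2 - (p 0 * p 1 + p 0 * p 2 + p 1 * p 2))) := by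
  simp only [Fin.prod_univ_three, Fin.sum_univ_three] at h ⊢
  linear_combination -h

theorem sub_mul_rpow_sub_rpow_nonneg {x y c : ℝ} (hx : 0 < x) (hy : 0 < y) (hc : c ≤ 0) :
    0 ≤ (y - x) * (x ^ c - y ^ c) := by
  rcases le_total x y with h | h
  · exact mul_nonneg (sub_nonneg.2 h) (sub_nonneg.2 (rpow_le_rpow_of_nonpos hx h hc))
  · exact mul_nonneg_of_nonpos_of_nonpos (sub_nonpos.2 h)
      (sub_nonpos.2 (rpow_le_rpow_of_nonpos hy h hc))

theorem prod_add_eq_of_hasZeroMoment {p q : Fin 3 → ℝ} {c r s : ℝ} (hp : ∀ j, 0 ≤ p j)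
    (hq : ∀ j, 0 ≤ q j) (hprod : ∏ j, p j = ∏ j, q j) (hc : c < 0) (hrs : r ≠ s)
    (hr : HasZeroMoment r fun t ↦ (∏ j, (t + p j)) ^ c - (∏ j, (t + q j)) ^ c)
    (hs : HasZeroMoment s fun t ↦ (∏ j, (t + p j)) ^ c - (∏ j, (t + q j)) ^ c) :
    ∀ t > 0, ∏ j, (t + p j) = ∏ j, (t + q j) := by
  wlog hlt : r < s generalizing r s
  · exact this hrs.symm hs hr (hrs.lt_or_gt.resolve_left hlt)
  set α := ∑ j, q j - ∑ j, p j
  set β := q 0 * q 1 + q 0 * q 2 + q 1 * q 2 - (p 0 * p 1 + p 0 * p 2 + p 1 * p 2)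
  have hdiff (t : ℝ) : ∏ j, (t + q j) - ∏ j, (t + p j) = t * (α * t + β) :=
    prod_add_sub_prod_add_of_prod_eq hprod t
  have hpos {p : Fin 3 → ℝ} (hp : ∀ j, 0 ≤ p j) : ∀ t > 0, 0 < ∏ j, (t + p j) :=
    fun t ht ↦ Finset.prod_pos fun j _ ↦ add_pos_of_pos_of_nonneg ht (hp j)
  intro t ht
  by_cases hzero : α = 0 ∧ β = 0
  · have hdiff_t := hdiff t
    rw [hzero.1, hzero.2, zero_mul, add_zero, mul_zero] at hdiff_t
    exact (sub_eq_zero.1 hdiff_t).symm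
  have hcont {p : Fin 3 → ℝ} (hp : ∀ j, 0 ≤ p j) :
      ContinuousOn (fun t ↦ (∏ j, (t + p j)) ^ c) (Ioi 0) :=
    ContinuousOn.rpow_const (by fun_prop) fun t ht ↦ .inl (hpos hp t ht).ne'
  have hsign : ∀ u > 0, 0 ≤ (α * u + β) * ((∏ j, (u + p j)) ^ c - (∏ j, (u + q j)) ^ c) :=
    fun u hu ↦ by
      refine nonneg_of_mul_nonneg_right ?_ hu
      rw [← mul_assoc, ← hdiff]
      exact sub_mul_rpow_sub_rpow_nonneg (hpos hp u hu) (hpos hq u hu) hc.le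
  have hvanish :=
    eqOn_zero_of_affine_mul_nonneg hlt ((hcont hp).sub (hcont hq)) hr hs hzero hsign ht
  exact (rpow_left_inj (hpos hp t ht).le (hpos hq t ht).le hc.ne).1 (sub_eq_zero.1 hvanish)

theorem exists_perm_of_dualVolume_ellipsoidSet_eq {a b : Fin 3 → ℝ} {i j : ℝ}
    (ha : ∀ k, 0 < a k) (hb : ∀ k, 0 < b k)
    (hi : i ∈ Ioo (-2) 5 \ {0, 3}) (hj : j ∈ Ioo (-2) 5 \ {0, 3}) (hij : i ≠ j)
    (hvol : dualVolume 3 3 (ellipsoidSet a) = dualVolume 3 3 (ellipsoidSet b))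
    (hdi : dualVolume 3 i (ellipsoidSet a) = dualVolume 3 i (ellipsoidSet b))
    (hdj : dualVolume 3 j (ellipsoidSet a) = dualVolume 3 j (ellipsoidSet b)) :
    ∃ σ : Equiv.Perm (Fin 3), ∀ k, b k = a (σ k) := by
  simp only [ellipsoidSet_eq_setOf_diagForm_le_one] at hvol hdi hdj
  set p : Fin 3 → ℝ := fun k ↦ (a k ^ 2)⁻¹
  set q : Fin 3 → ℝ := fun k ↦ (b k ^ 2)⁻¹
  have hp (k : Fin 3) : 0 < p k := inv_pos.2 (pow_pos (ha k) 2)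
  have hq (k : Fin 3) : 0 < q k := inv_pos.2 (pow_pos (hb k) 2)
  have hmoment {m : ℝ} (hm : m ∈ Ioo (-2) 5 \ {0, 3})
      (h : dualVolume 3 m {x | diagForm p x ≤ 1} = dualVolume 3 m {x | diagForm q x ≤ 1}) :=
    hasZeroMoment_prod_add_rpow_sub three_ne_zero hp hq (by exact_mod_cast hvol)
      ⟨hm.1.1, hm.1.2.trans_eq (by norm_num)⟩ (fun h₀ ↦ hm.2 (.inl h₀))
      (fun h₃ ↦ hm.2 (.inr (h₃.trans (by norm_num)))) h
  have hprod := prod_add_eq_of_hasZeroMoment (fun k ↦ (hp k).le) (fun k ↦ (hq k).le)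
    (prod_eq_of_dualVolume_eq three_ne_zero hp hq (by exact_mod_cast hvol)) (by norm_num)
    (fun h ↦ hij (by linarith)) (hmoment hi hdi) (hmoment hj hdj)
  obtain ⟨σ, hσ⟩ := exists_perm_eq_comp_of_prod_add_eq (Ioi_infinite 0) hprod
  exact ⟨σ, fun k ↦ (pow_left_inj₀ (hb k).le (ha _).le two_ne_zero).1 (inv_injective (hσ k))⟩

theorem dualVolumes_determine_ellipsoid_dim3_general {a b : Fin 3 → ℝ} {i j : ℝ}
    (ha : ∀ k, 0 < a k) (hb : ∀ k, 0 < b k)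
    (T₁ T₂ : EuclideanSpace ℝ (Fin 3) ≃ₗᵢ[ℝ] EuclideanSpace ℝ (Fin 3))
    {E₁ E₂ : Set (EuclideanSpace ℝ (Fin 3))}
    (hE₁ : E₁ = T₁ '' ellipsoidSet a) (hE₂ : E₂ = T₂ '' ellipsoidSet b)
    (hi : i ∈ Ioo (-2) 5 \ {0, 3}) (hj : j ∈ Ioo (-2) 5 \ {0, 3}) (hij : i ≠ j)
    (hvol : dualVolume 3 3 E₁ = dualVolume 3 3 E₂)
    (hdi : dualVolume 3 i E₁ = dualVolume 3 i E₂)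
    (hdj : dualVolume 3 j E₁ = dualVolume 3 j E₂) :
    (∃ T : EuclideanSpace ℝ (Fin 3) ≃ₗᵢ[ℝ] EuclideanSpace ℝ (Fin 3), E₂ = T '' E₁) ∧
      ∃ σ : Equiv.Perm (Fin 3), ∀ k, b k = a (σ k) := by
  subst hE₁ hE₂
  simp only [dualVolume_image] at hvol hdi hdj
  obtain ⟨σ, hσ⟩ := exists_perm_of_dualVolume_ellipsoidSet_eq ha hb hi hj hij hvol hdi hdj
  refine ⟨⟨T₁.symm.trans ((LinearIsometryEquiv.piLpCongrLeft 2 ℝ ℝ σ).symm.trans T₂), ?_⟩, σ, hσ⟩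
  obtain rfl : b = a ∘ σ := funext hσ
  rw [← image_ellipsoidSet_piLpCongrLeft a σ]
  simp only [image_image, LinearIsometryEquiv.trans_apply, LinearIsometryEquiv.symm_apply_apply]

end DimensionThree

/-- Centered ellipsoids in `ℝ³` with equal dual volumes `Ṽ_{-1}`, `Ṽ_3` (i.e. equal volumes)
and `Ṽ_4` are congruent: their multisets of semiaxes coincide. This yields the
Petrov–Tarasov theorem on intrinsic volumes `V₁, V₂, V₃` of ellipsoids in `ℝ³`. -/
theorem dualVolumes_determine_ellipsoid_dim3
    (a b : Fin 3 → ℝ) (ha : ∀ j, 0 < a j) (hb : ∀ j, 0 < b j)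
    (T₁ T₂ : EuclideanSpace ℝ (Fin 3) ≃ₗᵢ[ℝ] EuclideanSpace ℝ (Fin 3))
    (E₁ E₂ : Set (EuclideanSpace ℝ (Fin 3)))
    (hE₁ : E₁ = T₁ '' ellipsoidSet a) (hE₂ : E₂ = T₂ '' ellipsoidSet b)
    (hm1 : dualVolume 3 (-1) E₁ = dualVolume 3 (-1) E₂)
    (h3 : dualVolume 3 3 E₁ = dualVolume 3 3 E₂)
    (h4 : dualVolume 3 4 E₁ = dualVolume 3 4 E₂) :
    (∃ T : EuclideanSpace ℝ (Fin 3) ≃ₗᵢ[ℝ] EuclideanSpace ℝ (Fin 3), E₂ = T '' E₁) ∧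
      ∃ σ : Equiv.Perm (Fin 3), ∀ j, b j = a (σ j) :=
  dualVolumes_determine_ellipsoid_dim3_general ha hb T₁ T₂ hE₁ hE₂ (i := -1) (j := 4)
    (by norm_num) (by norm_num) (by norm_num) h3 hm1 h4
end

section
/- Let n ≥ 3 and 1 ≤ k ≤ n−1 with 2k ≠ n. For t > 0 and 1 ≤ m ≤ n−1 define J_m(t) = t^m · ∫_{S^{n-1}} ( t^{−2n}(θ₁² + ⋯ + θ_m²) + θ_{m+1}² + ⋯ + θₙ² )^{1/2} dθ (spherical Lebesgue measure). If a, b > 0 satisfy J_k(a) = J_k(b) and J_{n−k}(a) = J_{n−k}(b), then a = b. (Equivalently: two ellipsoids of revolution in ℝⁿ with equal volumes and equal intrinsic volumes V_k and V_{n−k}, k ≠ n/2, are congruent.) -/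
open MeasureTheory Real Set

/-- `J_m(t) = t^m ∫_{S^{n-1}} ( t^{-2n}(θ₁²+⋯+θ_m²) + θ_{m+1}²+⋯+θₙ² )^{1/2} dθ`;
up to a constant, the `m`-th intrinsic volume of the ellipsoid of revolution with
semiaxes `(t,…,t,t^{1-n})`. -/
noncomputable def Jfun (n m : ℕ) (t : ℝ) : ℝ :=
  t ^ m * ∫ θ : Metric.sphere (0 : EuclideanSpace ℝ (Fin n)) 1,
    Real.sqrt (∑ j : Fin n, (if (j : ℕ) < m then (t ^ (2 * n))⁻¹ else 1) *
      ((θ : EuclideanSpace ℝ (Fin n)) j) ^ 2) ∂(sphereMeasure n)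

/-!
For a diagonal quadratic form `Q` with weights `w ≥ 0`, `√(Q x)` is a constant multiple of
`∫ exp (-u / 2) * (1 - exp (-π * exp u * Q x)) du`. Integrating against the Gaussian
`exp (-π * ‖x‖ ^ 2)`, once in polar coordinates and once over `x` before `u`, turns the spherical
mean of `√Q` into a multiple of `∫ exp (-u / 2) * (1 - ∏ⱼ (1 + exp u * wⱼ) ^ (-1 / 2)) du`.

With `p = k`, `q = n - k` and `x = 2 * log a`, `J_k(a)` thus becomes a multiple of an integral
`F p q x` in which `x` enters only through `S x u = p * ℓ (u - q * x) + q * ℓ (u + p * x)`, where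
`ℓ u = log (2 * cosh (u / 2))` is even and strictly convex; `J_{n-k}(a)` becomes the same multiple
of `F q p x = F p q (-x)`. Convexity makes both `F p q` and `F q p` strictly increasing on
`[0, ∞)`. If `p < q`, comparing the integrands at `u` and `-u` shows that `F q p x - F p q x` has
the sign of `x`. Hence the two values determine first the sign of `x` and then `x` itself.
-/

section SphereIntegrals

lemma lintegral_exp_mul_one_sub_exp_neg {p : ℝ} (hp : p ≠ 0) {y : ℝ} (hy : 0 ≤ y) :
    ∫⁻ u : ℝ, ENNReal.ofReal (exp (-(p * u)) * (1 - exp (-(exp u * y))))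
      = ENNReal.ofReal (y ^ p) *
        ∫⁻ u : ℝ, ENNReal.ofReal (exp (-(p * u)) * (1 - exp (-exp u))) := by
  rcases hy.eq_or_lt with rfl | hy
  · simp [zero_rpow hp]
  obtain ⟨v, rfl⟩ : ∃ v, y = exp v := ⟨log y, (exp_log hy).symm⟩
  rw [← lintegral_add_right_eq_self
    (fun u : ℝ => ENNReal.ofReal (exp (-(p * u)) * (1 - exp (-exp u)))) v,
    ← lintegral_const_mul _ (by fun_prop)]
  refine lintegral_congr fun u => ?_
  have hshift : exp v ^ p * exp (-(p * (u + v))) = exp (-(p * u)) := by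
    rw [← exp_mul, ← exp_add]
    ring_nf
  rw [← ENNReal.ofReal_mul (by positivity), ← mul_assoc, hshift, ← exp_add]

lemma lintegral_comp_inv_norm_smul_mul_comp_norm {E : Type*} [NormedAddCommGroup E]
    [NormedSpace ℝ E] [FiniteDimensional ℝ E] [Nontrivial E] [MeasurableSpace E] [BorelSpace E]
    (μ : Measure E) [μ.IsAddHaarMeasure] {f : E → ENNReal} (hf : Measurable f)
    {ψ : ℝ → ENNReal} (hψ : Measurable ψ) :
    ∫⁻ x, f (‖x‖⁻¹ • x) * ψ ‖x‖ ∂μ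
      = (∫⁻ θ : Metric.sphere (0 : E) 1, f θ ∂μ.toSphere) *
        ∫⁻ r : Ioi (0 : ℝ), ψ r ∂Measure.volumeIoiPow (Module.finrank ℝ E - 1) := by
  rw [← lintegral_prod_mul (f := fun θ : Metric.sphere (0 : E) 1 => f θ)
      (g := fun r : Ioi (0 : ℝ) => ψ r) (by fun_prop) (by fun_prop),
    ← (μ.measurePreserving_homeomorphUnitSphereProd).lintegral_comp_emb
      (Homeomorph.measurableEmbedding _),
    ← restrict_compl_singleton (μ := μ) 0,
    ← lintegral_subtype_comap (measurableSet_singleton _).compl]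
  simp only [homeomorphUnitSphereProd_apply_fst_coe, homeomorphUnitSphereProd_apply_snd_coe,
    restrict_compl_singleton]

variable {ι : Type*} [Fintype ι] {w : ι → ℝ}

lemma exp_neg_pi_mul_sum_eq_prod (w x : ι → ℝ) :
    exp (-(π * ∑ j, w j * x j ^ 2)) = ∏ j, exp (-(π * w j) * x j ^ 2) := by
  rw [← exp_sum, Finset.mul_sum, ← Finset.sum_neg_distrib]
  exact congrArg exp (Finset.sum_congr rfl fun j _ => by ring)

lemma integrable_exp_neg_pi_mul_sum (hw : ∀ j, 0 < w j) :
    Integrable fun x : EuclideanSpace ℝ ι => exp (-(π * ∑ j, w j * x j ^ 2)) := by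
  rw [← (PiLp.volume_preserving_toLp ι).integrable_comp_emb
    (MeasurableEquiv.toLp 2 (ι → ℝ)).measurableEmbedding]
  simp only [Function.comp_def, exp_neg_pi_mul_sum_eq_prod]
  exact Integrable.fintype_prod (f := fun j (t : ℝ) => exp (-(π * w j) * t ^ 2))
    fun j => integrable_exp_neg_mul_sq (mul_pos pi_pos (hw j))

/-- If some `w j ≤ 0`, the integral diverges and both sides are the junk value `0`. -/
lemma integral_exp_neg_pi_mul_sum (w : ι → ℝ) :
    ∫ x : EuclideanSpace ℝ ι, exp (-(π * ∑ j, w j * x j ^ 2)) = ∏ j, (√(w j))⁻¹ := by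
  rw [← (PiLp.volume_preserving_toLp ι).integral_comp
    (MeasurableEquiv.toLp 2 (ι → ℝ)).measurableEmbedding]
  simp only [exp_neg_pi_mul_sum_eq_prod]
  rw [integral_fintype_prod_volume_eq_prod fun j (t : ℝ) => exp (-(π * w j) * t ^ 2)]
  refine Finset.prod_congr rfl fun j _ => ?_
  rw [integral_gaussian, div_mul_cancel_left₀ pi_ne_zero, sqrt_inv]

lemma sum_mul_sq_nonneg (hw : ∀ j, 0 ≤ w j) (x : ι → ℝ) : 0 ≤ ∑ j, w j * x j ^ 2 :=
  Finset.sum_nonneg fun j _ => mul_nonneg (hw j) (sq_nonneg _)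

lemma lintegral_one_sub_exp_neg_pi_mul_sum (hw : ∀ j, 0 ≤ w j) :
    ∫⁻ x : EuclideanSpace ℝ ι, ENNReal.ofReal
        ((1 - exp (-(π * ∑ j, w j * x j ^ 2))) * exp (-(π * ‖x‖ ^ 2)))
      = ENNReal.ofReal (1 - ∏ j, (√(1 + w j))⁻¹) := by
  have hw1 (j : ι) : 0 < 1 + w j := by linarith [hw j]
  have split (x : EuclideanSpace ℝ ι) :
      (1 - exp (-(π * ∑ j, w j * x j ^ 2))) * exp (-(π * ‖x‖ ^ 2))
        = exp (-(π * ∑ j, 1 * x j ^ 2)) - exp (-(π * ∑ j, (1 + w j) * x j ^ 2)) := by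
    rw [sub_mul, one_mul, ← exp_add, EuclideanSpace.real_norm_sq_eq]
    simp only [one_mul, add_mul, Finset.sum_add_distrib]
    ring_nf
  have hint₁ := integrable_exp_neg_pi_mul_sum (ι := ι) (w := fun _ => 1) fun _ => one_pos
  have hint₂ := integrable_exp_neg_pi_mul_sum hw1
  have nonneg (x : EuclideanSpace ℝ ι) :
      0 ≤ (1 - exp (-(π * ∑ j, w j * x j ^ 2))) * exp (-(π * ‖x‖ ^ 2)) := by
    refine mul_nonneg (sub_nonneg.2 (exp_le_one_iff.2 ?_)) (exp_pos _).le
    linarith [mul_nonneg pi_pos.le (sum_mul_sq_nonneg hw x)]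
  rw [← ofReal_integral_eq_lintegral_ofReal _ (.of_forall nonneg)]
  · simp only [split]
    rw [integral_sub hint₁ hint₂, integral_exp_neg_pi_mul_sum, integral_exp_neg_pi_mul_sum]
    simp
  · simp only [split]
    exact hint₁.sub hint₂

lemma sqrt_sum_eq_norm_mul (w : ι → ℝ) (x : EuclideanSpace ℝ ι) :
    √(∑ j, w j * x j ^ 2) = ‖x‖ * √(∑ j, w j * (‖x‖⁻¹ • x) j ^ 2) := by
  rcases eq_or_ne x 0 with rfl | hx
  · simp
  have hnorm : ‖x‖ ≠ 0 := norm_ne_zero_iff.2 hx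
  rw [← sqrt_sq (norm_nonneg x), ← sqrt_mul (sq_nonneg _), sqrt_sq (norm_nonneg x),
    Finset.mul_sum]
  refine congrArg sqrt (Finset.sum_congr rfl fun j _ => ?_)
  simp only [PiLp.smul_apply, smul_eq_mul]
  field_simp

lemma lintegral_sqrt_sum_mul_exp_neg_pi_mul_norm_sq [Nonempty ι] (w : ι → ℝ) :
    ∫⁻ x : EuclideanSpace ℝ ι, ENNReal.ofReal (√(∑ j, w j * x j ^ 2) * exp (-(π * ‖x‖ ^ 2)))
      = (∫⁻ θ : Metric.sphere (0 : EuclideanSpace ℝ ι) 1, ENNReal.ofReal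
          √(∑ j, w j * (θ : EuclideanSpace ℝ ι) j ^ 2)
          ∂(volume : Measure (EuclideanSpace ℝ ι)).toSphere) *
        ∫⁻ r : Ioi (0 : ℝ), ENNReal.ofReal (r * exp (-(π * (r : ℝ) ^ 2)))
          ∂Measure.volumeIoiPow (Module.finrank ℝ (EuclideanSpace ℝ ι) - 1) := by
  rw [← lintegral_comp_inv_norm_smul_mul_comp_norm volume
    (f := fun x : EuclideanSpace ℝ ι => ENNReal.ofReal √(∑ j, w j * x j ^ 2)) (by fun_prop)
    (ψ := fun r => ENNReal.ofReal (r * exp (-(π * r ^ 2)))) (by fun_prop)]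
  refine lintegral_congr fun x => ?_
  rw [← ENNReal.ofReal_mul (sqrt_nonneg _), sqrt_sum_eq_norm_mul w x]
  ring_nf

lemma lintegral_exp_mul_one_sub_prod (hw : ∀ j, 0 ≤ w j) :
    ∫⁻ u : ℝ, ENNReal.ofReal (exp (-(u / 2)) * (1 - ∏ j, (√(1 + exp u * w j))⁻¹))
      = (∫⁻ x : EuclideanSpace ℝ ι, ENNReal.ofReal
          (√(∑ j, w j * x j ^ 2) * exp (-(π * ‖x‖ ^ 2)))) *
        (ENNReal.ofReal √π *
          ∫⁻ u : ℝ, ENNReal.ofReal (exp (-(1 / 2 * u)) * (1 - exp (-exp u)))) := by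
  have sqrt_eq_lintegral (x : EuclideanSpace ℝ ι) :
      ENNReal.ofReal √(∑ j, w j * x j ^ 2) *
          (ENNReal.ofReal √π *
            ∫⁻ u : ℝ, ENNReal.ofReal (exp (-(1 / 2 * u)) * (1 - exp (-exp u))))
        = ∫⁻ u : ℝ, ENNReal.ofReal
          (exp (-(u / 2)) * (1 - exp (-(π * ∑ j, exp u * w j * x j ^ 2)))) := by
    rw [← mul_assoc, ← ENNReal.ofReal_mul (sqrt_nonneg _), mul_comm √_, ← sqrt_mul pi_pos.le,
      sqrt_eq_rpow, ← lintegral_exp_mul_one_sub_exp_neg (by norm_num)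
        (mul_nonneg pi_pos.le (sum_mul_sq_nonneg hw x))]
    refine lintegral_congr fun u => ?_
    simp only [mul_assoc, ← Finset.mul_sum]
    ring_nf
  symm
  calc _ = ∫⁻ x : EuclideanSpace ℝ ι, ∫⁻ u : ℝ, ENNReal.ofReal (exp (-(u / 2))) *
          ENNReal.ofReal
            ((1 - exp (-(π * ∑ j, exp u * w j * x j ^ 2))) * exp (-(π * ‖x‖ ^ 2))) := by
        rw [← lintegral_mul_const _ (by fun_prop)]
        refine lintegral_congr fun x => ?_
        rw [ENNReal.ofReal_mul (sqrt_nonneg _), mul_right_comm, sqrt_eq_lintegral,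
          ← lintegral_mul_const _ (by fun_prop)]
        refine lintegral_congr fun u => ?_
        rw [← ENNReal.ofReal_mul' (exp_pos _).le, ← ENNReal.ofReal_mul (exp_pos _).le, mul_assoc]
    _ = _ := by
        rw [lintegral_lintegral_swap (by fun_prop)]
        refine lintegral_congr fun u => ?_
        rw [lintegral_const_mul _ (by fun_prop), lintegral_one_sub_exp_neg_pi_mul_sum fun j =>
          mul_nonneg (exp_pos u).le (hw j), ENNReal.ofReal_mul (exp_pos _).le]

lemma exists_lintegral_sphere_sqrt_sum_mul_eq (ι : Type*) [Fintype ι] :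
    ∃ K : ENNReal, ∀ w : ι → ℝ, (∀ j, 0 ≤ w j) →
      (∫⁻ θ : Metric.sphere (0 : EuclideanSpace ℝ ι) 1, ENNReal.ofReal
          √(∑ j, w j * (θ : EuclideanSpace ℝ ι) j ^ 2)
          ∂(volume : Measure (EuclideanSpace ℝ ι)).toSphere) * K
        = ∫⁻ u : ℝ, ENNReal.ofReal (exp (-(u / 2)) * (1 - ∏ j, (√(1 + exp u * w j))⁻¹)) := by
  rcases isEmpty_or_nonempty ι
  · exact ⟨0, by simp⟩
  refine ⟨(∫⁻ r : Ioi (0 : ℝ), ENNReal.ofReal (r * exp (-(π * (r : ℝ) ^ 2)))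
      ∂Measure.volumeIoiPow (Module.finrank ℝ (EuclideanSpace ℝ ι) - 1)) *
    (ENNReal.ofReal √π *
      ∫⁻ u : ℝ, ENNReal.ofReal (exp (-(1 / 2 * u)) * (1 - exp (-exp u)))), fun w hw => ?_⟩
  rw [lintegral_exp_mul_one_sub_prod hw, lintegral_sqrt_sum_mul_exp_neg_pi_mul_norm_sq, mul_assoc]

end SphereIntegrals

section SpreadSums

/-- `p` copies of `f` at `u - q * x` and `q` copies at `u + p * x`: two clusters of points whose
barycentre stays at `u` while the parameter `x` spreads them apart. -/
noncomputable def spreadSum (f : ℝ → ℝ) (p q x u : ℝ) : ℝ :=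
  p * f (u - q * x) + q * f (u + p * x)

variable {f : ℝ → ℝ} {p q : ℝ}

lemma spreadSum_neg_left (f : ℝ → ℝ) (p q x u : ℝ) :
    spreadSum f p q (-x) u = spreadSum f q p x u := by
  simp only [spreadSum, mul_neg, sub_neg_eq_add, ← sub_eq_add_neg, add_comm]

lemma spreadSum_neg_right (hf : Function.Even f) (p q x u : ℝ) :
    spreadSum f p q x (-u) = spreadSum f q p x u := by
  have h₁ : f (-u - q * x) = f (u + q * x) := by rw [← hf]; ring_nf
  have h₂ : f (-u + p * x) = f (u - p * x) := by rw [← hf]; ring_nf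
  rw [spreadSum, spreadSum, h₁, h₂, add_comm]

lemma strictMonoOn_spreadSum (hf : StrictConvexOn ℝ univ f) (hp : 0 < p) (hq : 0 < q) (u : ℝ) :
    StrictMonoOn (fun x => spreadSum f p q x u) (Ici 0) := by
  intro x (hx : 0 ≤ x) y _ hxy
  have hy : 0 < y := hx.trans_lt hxy
  set A := u - q * y with hA
  set B := u + p * y with hB
  have hAB : A ≠ B := by
    have : A < B := by linarith [mul_pos hq hy, mul_pos hp hy]
    exact this.ne
  -- Both inner points are convex combinations of the outer points `A` and `B`.
  set s := q * (y - x) / ((p + q) * y) with hs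
  set t := p * (y - x) / ((p + q) * y) with ht
  have hs0 : 0 < s := by have := sub_pos.2 hxy; positivity
  have ht0 : 0 < t := by have := sub_pos.2 hxy; positivity
  have hs1 : 0 < 1 - s := by
    rw [sub_pos, hs, div_lt_one (by positivity)]
    nlinarith [mul_pos hp hy, mul_nonneg hq.le hx]
  have ht1 : 0 < 1 - t := by
    rw [sub_pos, ht, div_lt_one (by positivity)]
    nlinarith [mul_pos hq hy, mul_nonneg hp.le hx]
  have left := hf.2 (mem_univ A) (mem_univ B) hAB hs1 hs0 (by ring)
  have right := hf.2 (mem_univ A) (mem_univ B) hAB ht0 ht1 (by ring)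
  have hleft : (1 - s) • A + s • B = u - q * x := by
    simp only [smul_eq_mul, hs, hA, hB]; field_simp; ring
  have hright : t • A + (1 - t) • B = u + p * x := by
    simp only [smul_eq_mul, ht, hA, hB]; field_simp; ring
  have hst : p * s = q * t := by simp only [hs, ht]; ring
  rw [hleft] at left
  rw [hright] at right
  simp only [smul_eq_mul] at left right
  calc spreadSum f p q x u
      < p * ((1 - s) * f A + s * f B) + q * (t * f A + (1 - t) * f B) := by
        unfold spreadSum; gcongr
    _ = spreadSum f p q y u := by
        rw [spreadSum, ← hA, ← hB]
        linear_combination (f B - f A) * hst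

lemma spreadSum_lt_spreadSum_swap {u : ℝ}
    (hf : StrictConvexOn ℝ (Ici 0) fun r => f (u + r) - f (u - r))
    (hp : 0 < p) (hpq : p < q) {x : ℝ} (hx : 0 < x) :
    spreadSum f p q x u < spreadSum f q p x u := by
  have hpx : 0 < p * x := mul_pos hp hx
  have hqx : 0 < q * x := mul_pos (hp.trans hpq) hx
  have secant := hf.secant_strict_mono (a := 0) self_mem_Ici hpx.le hqx.le hpx.ne' hqx.ne'
    (mul_lt_mul_of_pos_right hpq hx)
  simp only [add_zero, sub_zero, sub_self] at secant
  rw [div_lt_div_iff₀ hpx hqx] at secant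
  have := lt_of_mul_lt_mul_right (a := x) (b := (f (u + p * x) - f (u - p * x)) * q)
    (c := (f (u + q * x) - f (u - q * x)) * p) (by linarith) hx.le
  unfold spreadSum
  linarith

end SpreadSums

section EvenSoftplus

/-- The even part `log (2 * cosh (u / 2))` of the softplus function `u ↦ log (1 + exp u)`. -/
noncomputable def evenSoftplus (u : ℝ) : ℝ := log (1 + exp u) - u / 2

lemma even_evenSoftplus : Function.Even evenSoftplus := by
  intro u
  have h : 1 + exp u = exp u * (1 + exp (-u)) := by
    rw [mul_add, ← exp_add, add_neg_cancel, exp_zero, mul_one, add_comm]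
  rw [evenSoftplus, evenSoftplus, h, log_mul (exp_ne_zero u) (by positivity), log_exp]
  ring

lemma hasDerivAt_evenSoftplus (u : ℝ) : HasDerivAt evenSoftplus (sigmoid u - 1 / 2) u := by
  refine ((((hasDerivAt_exp u).const_add 1).log (by positivity)).sub
    ((hasDerivAt_id u).div_const 2)).congr_deriv ?_
  rw [sigmoid_def, exp_neg]
  field_simp
  ring

lemma continuous_evenSoftplus : Continuous evenSoftplus :=
  continuous_iff_continuousAt.2 fun u => (hasDerivAt_evenSoftplus u).continuousAt

lemma strictConvexOn_evenSoftplus : StrictConvexOn ℝ univ evenSoftplus := by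
  refine StrictMono.strictConvexOn_univ_of_deriv continuous_evenSoftplus ?_
  rw [funext fun u => (hasDerivAt_evenSoftplus u).deriv]
  exact fun u v huv => sub_lt_sub_right (sigmoid_strictMono huv) _

lemma sigmoid_add_add_sigmoid_sub (u r : ℝ) :
    sigmoid (u + r) + sigmoid (u - r) - 1 = sinh u / (cosh u + cosh r) := by
  rw [sinh_eq, cosh_eq, cosh_eq, sigmoid_def, sigmoid_def]
  simp only [neg_add, sub_eq_add_neg, exp_add, exp_neg]
  have := exp_pos u
  have := exp_pos r
  field_simp
  ring

lemma strictConvexOn_evenSoftplus_add_sub_sub {u : ℝ} (hu : u < 0) :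
    StrictConvexOn ℝ (Ici 0) fun r => evenSoftplus (u + r) - evenSoftplus (u - r) := by
  have hderiv (r : ℝ) : HasDerivAt (fun r => evenSoftplus (u + r) - evenSoftplus (u - r))
      (sinh u / (cosh u + cosh r)) r := by
    refine (((hasDerivAt_evenSoftplus _).comp_const_add u r).sub
      ((hasDerivAt_evenSoftplus _).comp_const_sub u r)).congr_deriv ?_
    rw [← sigmoid_add_add_sigmoid_sub]
    ring
  refine StrictMonoOn.strictConvexOn_of_deriv (convex_Ici 0)
    (fun r _ => (hderiv r).continuousAt.continuousWithinAt) ?_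
  rw [interior_Ici]
  intro r hr s hs hrs
  rw [(hderiv r).deriv, (hderiv s).deriv]
  have hcosh : cosh r < cosh s :=
    cosh_strictMonoOn (Ioi_subset_Ici_self hr) (Ioi_subset_Ici_self hs) hrs
  have := cosh_pos u
  have := cosh_pos r
  simp only [div_eq_mul_inv]
  exact mul_lt_mul_of_neg_left (by gcongr) (sinh_neg_iff.2 hu)

end EvenSoftplus

section ProfileIntegral

lemma integral_pos_of_add_comp_neg_pos {f : ℝ → ℝ} (hf : Integrable f)
    (hpos : ∀ u < 0, 0 < f u + f (-u)) : 0 < ∫ u, f u := by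
  have fold : ∫ u, f u = ∫ u in Iio 0, (f u + f (-u)) := by
    rw [← integral_Iic_eq_integral_Iio, integral_add hf.integrableOn hf.comp_neg.integrableOn,
      integral_comp_neg_Iic, neg_zero, ← compl_Iic, integral_add_compl measurableSet_Iic hf]
  have hsupport : Iio (0 : ℝ) ⊆ Function.support (fun u => f u + f (-u)) ∩ Iio 0 :=
    fun u hu => ⟨(hpos u hu).ne', hu⟩
  rw [fold, setIntegral_pos_iff_support_of_nonneg_ae
    ((ae_restrict_iff' measurableSet_Iio).2 (.of_forall fun u hu => (hpos u hu).le))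
    (hf.add hf.comp_neg).integrableOn]
  exact (by simp : 0 < volume (Iio (0 : ℝ))).trans_le (measure_mono hsupport)

/-- The integrand `exp (-u / 2) * (1 - ∏ⱼ (1 + exp u * wⱼ) ^ (-1 / 2))` of the integral
representation, with `p` weights `wⱼ` equal to `exp (-q * x)` and `q` weights equal to
`exp (p * x)`. The multiplicities `p`, `q` are allowed to be real. -/
noncomputable def profile (p q x u : ℝ) : ℝ :=
  exp (-(u / 2)) * (1 - exp (-((p + q) * u / 2 + spreadSum evenSoftplus p q x u) / 2))

/-- Up to a factor depending only on `p + q`, the value of `Jfun (p + q) p` at `exp (x / 2)`. -/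
noncomputable def profileIntegral (p q x : ℝ) : ℝ := ∫ u, profile p q x u

variable {p q : ℝ}

lemma profileIntegral_neg (p q x : ℝ) : profileIntegral p q (-x) = profileIntegral q p x := by
  simp only [profileIntegral, profile, spreadSum_neg_left, add_comm p q]

lemma add_spreadSum_evenSoftplus (p q x u : ℝ) :
    (p + q) * u / 2 + spreadSum evenSoftplus p q x u
      = p * log (1 + exp (u - q * x)) + q * log (1 + exp (u + p * x)) := by
  unfold spreadSum evenSoftplus
  ring

lemma log_one_add_exp_pos (v : ℝ) : 0 < log (1 + exp v) :=
  log_pos (by linarith [exp_pos v])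

lemma log_one_add_exp_le (v : ℝ) : log (1 + exp v) ≤ exp v := by
  linarith [log_le_sub_one_of_pos (show 0 < 1 + exp v by positivity)]

lemma profile_nonneg (hp : 0 ≤ p) (hq : 0 ≤ q) (x u : ℝ) : 0 ≤ profile p q x u := by
  have h₁ := mul_nonneg hp (log_one_add_exp_pos (u - q * x)).le
  have h₂ := mul_nonneg hq (log_one_add_exp_pos (u + p * x)).le
  rw [profile, add_spreadSum_evenSoftplus]
  exact mul_nonneg (exp_pos _).le (sub_nonneg.2 (exp_le_one_iff.2 (by linarith)))

lemma continuous_profile (p q x : ℝ) : Continuous (profile p q x) := by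
  have := continuous_evenSoftplus
  unfold profile spreadSum
  fun_prop

lemma profile_le_exp_neg (p q x u : ℝ) : profile p q x u ≤ exp (-(1 / 2) * u) := by
  rw [profile, show -(1 / 2) * u = -(u / 2) by ring]
  exact mul_le_of_le_one_right (exp_pos _).le (sub_le_self _ (exp_pos _).le)

lemma profile_le_mul_exp (hp : 0 ≤ p) (hq : 0 ≤ q) (x u : ℝ) :
    profile p q x u ≤ (p * exp (-(q * x)) + q * exp (p * x)) / 2 * exp (1 / 2 * u) := by
  rw [profile, add_spreadSum_evenSoftplus]
  set L := p * log (1 + exp (u - q * x)) + q * log (1 + exp (u + p * x)) with hL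
  have hLle : L ≤ p * exp (u - q * x) + q * exp (u + p * x) := by
    rw [hL]
    gcongr <;> exact log_one_add_exp_le _
  calc exp (-(u / 2)) * (1 - exp (-L / 2))
      ≤ exp (-(u / 2)) * ((p * exp (u - q * x) + q * exp (u + p * x)) / 2) := by
        gcongr
        linarith [add_one_le_exp (-L / 2)]
    _ = _ := by
        rw [sub_eq_add_neg, exp_add, exp_add, show 1 / 2 * u = -(u / 2) + u by ring, exp_add]
        ring

lemma integrable_profile (hp : 0 ≤ p) (hq : 0 ≤ q) (x : ℝ) : Integrable (profile p q x) := by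
  have hmeas := (continuous_profile p q x).aestronglyMeasurable (μ := volume)
  have hnorm (u : ℝ) : ‖profile p q x u‖ = profile p q x u :=
    norm_of_nonneg (profile_nonneg hp hq x u)
  rw [← integrableOn_univ, ← Iic_union_Ioi (a := (0 : ℝ))]
  refine .union ?_ ?_
  · exact ((integrableOn_exp_mul_Iic one_half_pos 0).const_mul _).mono' hmeas.restrict
      (.of_forall fun u => (hnorm u).trans_le (profile_le_mul_exp hp hq x u))
  · exact (integrableOn_exp_mul_Ioi (neg_neg_of_pos one_half_pos) 0).mono' hmeas.restrict
      (.of_forall fun u => (hnorm u).trans_le (profile_le_exp_neg p q x u))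

lemma profileIntegral_nonneg (hp : 0 ≤ p) (hq : 0 ≤ q) (x : ℝ) : 0 ≤ profileIntegral p q x :=
  integral_nonneg (profile_nonneg hp hq x)

lemma strictMonoOn_profileIntegral (hp : 0 < p) (hq : 0 < q) :
    StrictMonoOn (profileIntegral p q) (Ici 0) := by
  intro x hx y hy hxy
  have hx_int := integrable_profile hp.le hq.le x
  have hy_int := integrable_profile hp.le hq.le y
  have hlt (u : ℝ) : profile p q x u < profile p q y u := by
    have := strictMonoOn_spreadSum strictConvexOn_evenSoftplus hp hq u hx hy hxy
    unfold profile
    gcongr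
  rw [← sub_pos, profileIntegral, profileIntegral, ← integral_sub hy_int hx_int]
  exact integral_pos_of_add_comp_neg_pos (hy_int.sub hx_int) fun u _ =>
    add_pos (sub_pos.2 (hlt u)) (sub_pos.2 (hlt (-u)))

/-- The difference of the two integrands is `exp (-c * u) * d u` with `c > 0` and `d` odd, and `d`
is positive on the negative half-line. -/
lemma profileIntegral_lt_swap (hp : 0 < p) (hpq : p < q) {x : ℝ} (hx : 0 < x) :
    profileIntegral p q x < profileIntegral q p x := by
  have hq : 0 < q := hp.trans hpq
  have hpq_int := integrable_profile hp.le hq.le x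
  have hqp_int := integrable_profile hq.le hp.le x
  set c := (2 + p + q) / 4 with hc
  set d : ℝ → ℝ := fun u =>
    exp (-spreadSum evenSoftplus p q x u / 2) - exp (-spreadSum evenSoftplus q p x u / 2) with hd
  have hdiff (u : ℝ) : profile q p x u - profile p q x u = exp (-(c * u)) * d u := by
    have factor (S : ℝ) : exp (-(u / 2)) * exp (-((p + q) * u / 2 + S) / 2)
        = exp (-(c * u)) * exp (-S / 2) := by
      rw [← exp_add, ← exp_add, hc]
      ring_nf
    simp only [profile, add_comm q p, hd, mul_sub, ← factor]
    ring
  have hodd (u : ℝ) : d (-u) = -d u := by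
    simp only [hd, spreadSum_neg_right even_evenSoftplus, neg_sub]
  have hd_pos {u : ℝ} (hu : u < 0) : 0 < d u := by
    have := spreadSum_lt_spreadSum_swap (strictConvexOn_evenSoftplus_add_sub_sub hu) hp hpq hx
    exact sub_pos.2 (exp_lt_exp.2 (by linarith))
  rw [← sub_pos, profileIntegral, profileIntegral, ← integral_sub hqp_int hpq_int]
  refine integral_pos_of_add_comp_neg_pos (hqp_int.sub hpq_int) fun u hu => ?_
  have hcu : c * u < 0 := mul_neg_of_pos_of_neg (by positivity) hu
  have hexp : exp (-(c * -u)) < exp (-(c * u)) := exp_lt_exp.2 (by linarith)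
  simp only [hdiff, hodd]
  nlinarith [mul_pos (sub_pos.2 hexp) (hd_pos hu)]

lemma profileIntegral_lt_swap_iff (hp : 0 < p) (hpq : p < q) {x : ℝ} :
    profileIntegral p q x < profileIntegral q p x ↔ 0 < x := by
  refine ⟨fun h => ?_, profileIntegral_lt_swap hp hpq⟩
  by_contra! hx
  rcases hx.eq_or_lt with rfl | hx
  · simp [← profileIntegral_neg p q 0] at h
  · have := profileIntegral_lt_swap hp hpq (neg_pos.2 hx)
    rw [profileIntegral_neg, profileIntegral_neg] at this
    exact this.not_gt h

lemma eq_of_profileIntegral_eq (hp : 0 < p) (hq : 0 < q) (hpq : p ≠ q) {x y : ℝ}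
    (h₁ : profileIntegral p q x = profileIntegral p q y)
    (h₂ : profileIntegral q p x = profileIntegral q p y) : x = y := by
  wlog hlt : p < q generalizing p q
  · exact this hq hp hpq.symm h₂ h₁ (hpq.lt_or_gt.resolve_left hlt)
  have hsign : 0 < x ↔ 0 < y := by
    rw [← profileIntegral_lt_swap_iff hp hlt, h₁, h₂, profileIntegral_lt_swap_iff hp hlt]
  rcases lt_or_ge 0 x with hx | hx
  · exact (strictMonoOn_profileIntegral hp hq).injOn hx.le (hsign.1 hx).le h₁
  · have hy : y ≤ 0 := not_lt.1 (hsign.not.1 hx.not_gt)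
    rw [← profileIntegral_neg q p, ← profileIntegral_neg q p y] at h₁
    exact neg_injective
      ((strictMonoOn_profileIntegral hq hp).injOn (neg_nonneg.2 hx) (neg_nonneg.2 hy) h₁)

end ProfileIntegral

section RevolutionEllipsoid

lemma Jfun_eq_integral_sqrt {n k : ℕ} (hkn : k ≤ n) {a : ℝ} (ha : 0 < a) :
    Jfun n k a = ∫ θ : Metric.sphere (0 : EuclideanSpace ℝ (Fin n)) 1,
      √(∑ j : Fin n, (if (j : ℕ) < k then (a ^ (2 * (n - k)))⁻¹ else a ^ (2 * k)) *
        (θ : EuclideanSpace ℝ (Fin n)) j ^ 2) ∂sphereMeasure n := by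
  rw [Jfun, ← integral_const_mul]
  refine integral_congr_ae (.of_forall fun θ => ?_)
  beta_reduce
  rw [← sqrt_sq (pow_pos ha k).le, ← sqrt_mul (sq_nonneg _), Finset.mul_sum]
  refine congrArg sqrt (Finset.sum_congr rfl fun j _ => ?_)
  rw [← mul_assoc, ← pow_mul, mul_comm k 2]
  congr 1
  split_ifs
  · rw [Nat.mul_sub, pow_sub₀ a ha.ne' (by omega), mul_inv, inv_inv, mul_comm]
  · rw [mul_one]

lemma sqrt_one_add_exp_inv (v : ℝ) : (√(1 + exp v))⁻¹ = exp (-(log (1 + exp v) / 2)) := by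
  rw [exp_neg, exp_half, exp_log (by positivity)]

lemma exp_mul_one_sub_prod_eq_profile (k m : ℕ) {a : ℝ} (ha : 0 < a) (u : ℝ) :
    exp (-(u / 2)) * (1 - ∏ j : Fin (k + m),
        (√(1 + exp u * if (j : ℕ) < k then (a ^ (2 * m))⁻¹ else a ^ (2 * k)))⁻¹)
      = profile k m (2 * log a) u := by
  have hsmall : exp u * (a ^ (2 * m))⁻¹ = exp (u - m * (2 * log a)) := by
    rw [exp_sub, ← exp_log (pow_pos ha _), log_pow, div_eq_mul_inv]
    push_cast
    ring_nf
  have hlarge : exp u * a ^ (2 * k) = exp (u + k * (2 * log a)) := by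
    rw [exp_add, ← exp_log (pow_pos ha _), log_pow]
    push_cast
    ring_nf
  rw [profile, add_spreadSum_evenSoftplus]
  simp only [Fin.prod_univ_add, Fin.val_castAdd, Fin.val_natAdd, Fin.is_lt, if_true,
    not_lt.2 (Nat.le_add_right k _), if_false, Finset.prod_const, Finset.card_univ,
    Fintype.card_fin, hsmall, hlarge, sqrt_one_add_exp_inv, ← exp_nat_mul, ← exp_add]
  ring_nf

lemma exists_ofReal_Jfun_mul_eq (k m : ℕ) :
    ∃ K : ENNReal, ∀ a : ℝ, 0 < a →
      ENNReal.ofReal (Jfun (k + m) k a) * K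
        = ENNReal.ofReal (profileIntegral k m (2 * log a)) := by
  obtain ⟨K, hK⟩ := exists_lintegral_sphere_sqrt_sum_mul_eq (Fin (k + m))
  refine ⟨K, fun a ha => ?_⟩
  have : IsFiniteMeasure (sphereMeasure (k + m)) := by unfold sphereMeasure; infer_instance
  set w : Fin (k + m) → ℝ := fun j => if (j : ℕ) < k then (a ^ (2 * m))⁻¹ else a ^ (2 * k)
    with hw_def
  have hw (j : Fin (k + m)) : 0 ≤ w j := by
    simp only [hw_def]
    split_ifs <;> positivity
  have hcont : Continuous fun θ : Metric.sphere (0 : EuclideanSpace ℝ (Fin (k + m))) 1 =>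
      √(∑ j, w j * (θ : EuclideanSpace ℝ (Fin (k + m))) j ^ 2) := by fun_prop
  rw [Jfun_eq_integral_sqrt (Nat.le_add_right k m) ha, Nat.add_sub_cancel_left,
    ofReal_integral_eq_lintegral_ofReal
      (hcont.integrable_of_hasCompactSupport (.of_compactSpace _))
      (.of_forall fun θ => sqrt_nonneg _),
    sphereMeasure, hK w hw, profileIntegral,
    ofReal_integral_eq_lintegral_ofReal (integrable_profile k.cast_nonneg m.cast_nonneg _)
      (.of_forall (profile_nonneg k.cast_nonneg m.cast_nonneg _))]
  simp only [hw_def, exp_mul_one_sub_prod_eq_profile k m ha]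

lemma profileIntegral_eq_of_Jfun_eq {k m : ℕ} {a b : ℝ} (ha : 0 < a)
    (hb : 0 < b) (h : Jfun (k + m) k a = Jfun (k + m) k b) :
    profileIntegral k m (2 * log a) = profileIntegral k m (2 * log b) := by
  obtain ⟨K, hK⟩ := exists_ofReal_Jfun_mul_eq k m
  have hnonneg := profileIntegral_nonneg (Nat.cast_nonneg (α := ℝ) k) (Nat.cast_nonneg m)
  rw [← ENNReal.ofReal_eq_ofReal_iff (hnonneg _) (hnonneg _), ← hK a ha, ← hK b hb, h]

end RevolutionEllipsoid

/-- Two ellipsoids of revolution in `ℝⁿ` with equal volumes and equal intrinsic volumes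
`V_k` and `V_{n-k}`, `2k ≠ n`, are congruent: `J_k(a) = J_k(b)` and
`J_{n-k}(a) = J_{n-k}(b)` force `a = b`. -/
theorem revolution_ellipsoid_unique_of_Jk_Jnk
    (n : ℕ) (hn : 3 ≤ n) (k : ℕ) (hk1 : 1 ≤ k) (hk2 : k ≤ n - 1) (hk3 : 2 * k ≠ n)
    (a b : ℝ) (ha : 0 < a) (hb : 0 < b)
    (h1 : Jfun n k a = Jfun n k b)
    (h2 : Jfun n (n - k) a = Jfun n (n - k) b) :
    a = b := by
  obtain ⟨m, rfl⟩ : ∃ m, n = k + m := ⟨n - k, by omega⟩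
  have hk : (0 : ℝ) < k := by exact_mod_cast hk1
  have hm : (0 : ℝ) < m := by exact_mod_cast (by omega : 0 < m)
  have hkm : (k : ℝ) ≠ m := by exact_mod_cast (by omega : k ≠ m)
  rw [Nat.add_sub_cancel_left, Nat.add_comm k m] at h2
  have hlog : 2 * log a = 2 * log b := eq_of_profileIntegral_eq hk hm hkm
    (profileIntegral_eq_of_Jfun_eq ha hb h1) (profileIntegral_eq_of_Jfun_eq ha hb h2)
  exact log_injOn_pos ha hb (mul_left_cancel₀ two_ne_zero hlog)
end
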